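/- arXiv:math/0407230 — 3 statements merged into one kernel-verified Lean document; each statement's English description precedes it below -/
import Mathlib

section
/- P ∘ P = 0 as an operator K^{−q} → K^{−q−2}, for every 0 ≤ q ≤ n. -/
/-!
Setting: `n ≥ 1`, `U ⊆ ℂⁿ` a nonempty convex open set.  Points of `U × U` are
written `p = (z, ζ)` with `z = p.1`, `ζ = p.2`.  For `0 ≤ q ≤ n`,
`K^{-q} = Λ^q(ℂⁿ) ⊗ O(U×U)` is encoded by the coefficients of its elements on
the basis `e^I`, where the strictly increasing multi-indices
`I = (i₁ < … < i_q)` are encoded as finsets `I ⊆ Fin n` of cardinality `q`.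
-/

open scoped BigOperators

namespace TwistedKoszul

variable (n : ℕ)

/-- Points of `ℂⁿ × ℂⁿ`. -/
abbrev Pt (n : ℕ) := (Fin n → ℂ) × (Fin n → ℂ)

/-- A family of coefficients, indexed by the basis vectors `e^I` of the
exterior algebra `Λ^•(ℂⁿ)` (strictly increasing multi-indices `I`, encoded as
finsets).  An element of `K^{-q}` is such a family supported on finsets of
cardinality `q`, with holomorphic coefficients (see `MemK`). -/
abbrev Coeff (n : ℕ) := Finset (Fin n) → Pt n → ℂ

/-- The sign `(-1)^{#{i ∈ I | i < j}}`, so that `e^j ∧ e^I = sgn j I • e^{I ∪ {j}}`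
for `j ∉ I`. -/
noncomputable def sgn (j : Fin n) (I : Finset (Fin n)) : ℂ :=
  (-1 : ℂ) ^ (I.filter (fun i => i < j)).card

/-- The holomorphic partial derivative `∂f/∂z^j` in the `j`-th coordinate of
the first factor. -/
noncomputable def pd (j : Fin n) (f : Pt n → ℂ) (p : Pt n) : ℂ :=
  fderiv ℂ f p (Pi.single j 1, 0)

/-- The Koszul differential `d_K : K^{-q} → K^{-q+1}`: contraction with
`Σ_i (z^i - ζ^i) ě^i`, i.e. `d_K(f e^I) = Σ_r (-1)^{r-1} (z^{i_r} - ζ^{i_r}) f e^{I_r}`. -/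
noncomputable def dK (ω : Coeff n) : Coeff n := fun J p =>
  ∑ j ∈ Jᶜ, sgn n j J * ((p.1 j - p.2 j) * ω (insert j J) p)

/-- The homotopy operator `P : K^{-q} → K^{-q-1}`:
`P(f e^I) = Σ_j (∫₀¹ t^{|I|} (∂f/∂z^j)(ζ + t(z - ζ), ζ) dt) e^j ∧ e^I`. -/
noncomputable def P (ω : Coeff n) : Coeff n := fun J p =>
  ∑ j ∈ J, sgn n j (J.erase j) *
    ∫ t in (0:ℝ)..1, (t : ℂ) ^ (J.card - 1) *
      pd n j (ω (J.erase j)) (p.2 + t • (p.1 - p.2), p.2)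

/-- The operator `res`: zero on `K^{-q}` for `q ≥ 1`, and
`res(f)(z, ζ) = f(ζ, ζ)` for `f ∈ K^0`. -/
noncomputable def res (ω : Coeff n) : Coeff n := fun J p =>
  if J = ∅ then ω ∅ (p.2, p.2) else 0

/-- The element of `K^0 = O(U×U)` determined by a single function. -/
noncomputable def ofFun (f : Pt n → ℂ) : Coeff n := fun J p => if J = ∅ then f p else 0

/-- `ω` is an element of `K^{-q}` over `U × U`: it is supported on
multi-indices of length `q` and its coefficients are holomorphic on `U × U`. -/
noncomputable def MemK (U : Set (Fin n → ℂ)) (q : ℕ) (ω : Coeff n) : Prop :=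
  (∀ I : Finset (Fin n), I.card ≠ q → ω I = 0) ∧
  ∀ I : Finset (Fin n), DifferentiableOn ℂ (ω I) (U ×ˢ U)

end TwistedKoszul

namespace TwistedKoszul

open Metric Set MeasureTheory Filter Topology

theorem aux_deriv {E : Type*} [NormedAddCommGroup E] [NormedSpace ℂ E] {f : E → ℂ} {x v : E}
    {w : ℂ} (hf : DifferentiableAt ℂ f (x + w • v)) :
    HasDerivAt (fun w : ℂ => f (x + w • v)) (fderiv ℂ f (x + w • v) v) w := by
  have h1 : HasDerivAt (fun w : ℂ => x + w • v) v w := by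
    simpa using ((hasDerivAt_id w).smul_const v).const_add x
  exact hf.hasFDerivAt.comp_hasDerivAt w h1

theorem aux_bound {E : Type*} [NormedAddCommGroup E] [NormedSpace ℂ E] {f : E → ℂ} {x : E}
    {r C : ℝ} (hr : 0 < r) (hf : ∀ y ∈ closedBall x r, DifferentiableAt ℂ f y)
    (hC : ∀ y ∈ closedBall x r, ‖f y‖ ≤ C) : ‖fderiv ℂ f x‖ ≤ C / r := by
  have hC0 : 0 ≤ C := (norm_nonneg _).trans (hC x (mem_closedBall_self hr.le))
  refine ContinuousLinearMap.opNorm_le_bound _ (by positivity) fun v => ?_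
  rcases eq_or_ne v 0 with rfl | hv
  · simp
  have hv' : 0 < ‖v‖ := norm_pos_iff.2 hv
  have hmem : ∀ w ∈ closedBall (0:ℂ) (r / ‖v‖), x + w • v ∈ closedBall x r := by
    intro w hw
    simp only [mem_closedBall, dist_zero_right, dist_self_add_left, norm_smul] at hw ⊢
    rwa [le_div_iff₀ hv'] at hw
  have hd : DifferentiableOn ℂ (fun w : ℂ => f (x + w • v)) (closedBall 0 (r / ‖v‖)) := fun w hw =>
    (aux_deriv (hf _ (hmem w hw))).differentiableAt.differentiableWithinAt
  have h := Complex.norm_deriv_le_of_forall_mem_sphere_norm_le (C := C) (div_pos hr hv')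
    (hd.mono closure_ball_subset_closedBall).diffContOnCl
    (fun z hz => hC _ (hmem z (sphere_subset_closedBall hz)))
  have h2 := (aux_deriv (f := f) (x := x) (v := v) (w := 0) (by
    simpa using hf x (mem_closedBall_self hr.le))).deriv
  rw [h2] at h
  simp only [zero_smul, add_zero] at h
  refine h.trans (le_of_eq ?_)
  field_simp

theorem aux_param {E : Type*} [NormedAddCommGroup E] [NormedSpace ℂ E] [FiniteDimensional ℂ E]
    {W : Set E} (hW : IsOpen W) {f : E → ℂ} (hf : DifferentiableOn ℂ f W)
    {a : ℝ → ℂ} (ha : Continuous a) {A : ℝ → E →L[ℂ] E} (hA : Continuous A)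
    {c : ℝ → E} (hc : Continuous c) {l u : ℝ} (p : E)
    (hp : ∀ t ∈ uIcc l u, A t p + c t ∈ W) :
    HasFDerivAt (fun x => ∫ t in l..u, a t * f (A t x + c t))
      (∫ t in l..u, a t • (fderiv ℂ f (A t p + c t)).comp (A t)) p := by
  have : ProperSpace E := FiniteDimensional.proper ℂ E
  have hfd : ∀ y ∈ W, DifferentiableAt ℂ f y := fun y hy => (hf y hy).differentiableAt (hW.mem_nhds hy)
  set K : Set E := (fun t => A t p + c t) '' uIcc l u with hK
  have hcurve : ∀ x, Continuous fun t => A t x + c t := fun x => by fun_prop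
  have hKc : IsCompact K := isCompact_uIcc.image (hcurve p)
  have hKW : K ⊆ W := by rintro _ ⟨t, ht, rfl⟩; exact hp t ht
  obtain ⟨δ, hδ, hδW⟩ := hKc.exists_cthickening_subset_open hW hKW
  have hcc : IsCompact (cthickening δ K) := hKc.cthickening
  obtain ⟨C, hC⟩ := hcc.exists_bound_of_continuousOn (hf.continuousOn.mono hδW)
  obtain ⟨M, hM⟩ := isCompact_uIcc.exists_bound_of_continuousOn (hA.continuousOn (s := uIcc l u))
  obtain ⟨B, hB⟩ := isCompact_uIcc.exists_bound_of_continuousOn (ha.continuousOn (s := uIcc l u))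
  have hM0 : 0 ≤ M := (norm_nonneg _).trans (hM l left_mem_uIcc)
  have hB0 : 0 ≤ B := (norm_nonneg _).trans (hB l left_mem_uIcc)
  have hε : 0 < δ / 2 / (M + 1) := by positivity
  have hclose : ∀ t ∈ uIcc l u, ∀ x ∈ ball p (δ / 2 / (M + 1)), ∀ y ∈ closedBall (A t x + c t) (δ/2),
      y ∈ cthickening δ K := by
    intro t ht x hx y hy
    refine mem_cthickening_of_dist_le y (A t p + c t) δ K ⟨t, ht, rfl⟩ ?_
    have h1 : dist (A t x + c t) (A t p + c t) ≤ δ / 2 := by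
      rw [dist_add_right, dist_eq_norm, ← map_sub]
      refine ((A t).le_opNorm _).trans ?_
      rw [mem_ball, dist_eq_norm, lt_div_iff₀ (by positivity)] at hx
      nlinarith [hM t ht, norm_nonneg (x - p)]
    have := dist_triangle y (A t x + c t) (A t p + c t)
    rw [mem_closedBall] at hy
    linarith
  have hxW : ∀ t ∈ uIcc l u, ∀ x ∈ ball p (δ / 2 / (M + 1)), A t x + c t ∈ W := fun t ht x hx =>
    hδW (hclose t ht x hx _ (mem_closedBall_self (by positivity)))
  have hcont : ∀ x ∈ ball p (δ / 2 / (M + 1)), ContinuousOn (fun t => a t * f (A t x + c t)) (uIcc l u) := by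
    intro x hx
    exact ha.continuousOn.mul (hf.continuousOn.comp (hcurve x).continuousOn fun t ht => hxW t ht x hx)
  refine intervalIntegral.hasFDerivAt_integral_of_dominated_of_fderiv_le
    (F' := fun x t => a t • (fderiv ℂ f (A t x + c t)).comp (A t))
    (bound := fun _ => B * (C / (δ / 2) * M)) (ball_mem_nhds p hε) ?_ ?_ ?_ ?_ ?_ ?_
  · filter_upwards [ball_mem_nhds p hε] with x hx
    exact ((hcont x hx).mono uIoc_subset_uIcc).aestronglyMeasurable measurableSet_uIoc
  · exact (hcont p (mem_ball_self hε)).intervalIntegrable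
  · borelize E
    have h1 : StronglyMeasurable fun t => fderiv ℂ f (A t p + c t) := by
      have : Measurable fun t => fderiv ℂ f (A t p + c t) :=
        (measurable_fderiv ℂ f).comp (hcurve p).measurable
      have : ProperSpace (E →L[ℂ] ℂ) := FiniteDimensional.proper ℂ _
      exact Measurable.stronglyMeasurable ‹_›
    have h2 : StronglyMeasurable fun t => (fderiv ℂ f (A t p + c t)).comp (A t) := by
      have hcomp : Continuous fun q : (E →L[ℂ] ℂ) × (E →L[ℂ] E) => q.1.comp q.2 := by fun_prop
      exact hcomp.comp_stronglyMeasurable (h1.prodMk hA.stronglyMeasurable)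
    exact (ha.stronglyMeasurable.smul h2).aestronglyMeasurable
  · refine Eventually.of_forall fun t ht x hx => ?_
    have ht := uIoc_subset_uIcc ht
    have hb : ‖fderiv ℂ f (A t x + c t)‖ ≤ C / (δ / 2) :=
      aux_bound (by positivity) (fun y hy => hfd y (hδW (hclose t ht x hx y hy)))
        (fun y hy => hC y (hclose t ht x hx y hy))
    rw [norm_smul]
    have := norm_nonneg (fderiv ℂ f (A t x + c t))
    refine mul_le_mul (hB t ht) ?_ (norm_nonneg _) hB0
    refine (ContinuousLinearMap.opNorm_comp_le _ _).trans ?_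
    exact mul_le_mul hb (hM t ht) (norm_nonneg _) (this.trans hb)
  · exact intervalIntegrable_const
  · refine Eventually.of_forall fun t ht x hx => ?_
    have ht := uIoc_subset_uIcc ht
    have h1 : HasFDerivAt (fun x => A t x + c t) (A t) x := (A t).hasFDerivAt.add_const _
    exact ((hfd _ (hxW t ht x hx)).hasFDerivAt.comp x h1).const_mul (a t)

theorem aux_fderiv {E : Type*} [NormedAddCommGroup E] [NormedSpace ℂ E] [FiniteDimensional ℂ E]
    {W : Set E} (hW : IsOpen W) {f : E → ℂ} (hf : DifferentiableOn ℂ f W) (v : E) :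
    DifferentiableOn ℂ (fun x => fderiv ℂ f x v) W := by
  intro p hp
  refine DifferentiableAt.differentiableWithinAt ?_
  have hfd : ∀ y ∈ W, DifferentiableAt ℂ f y := fun y hy => (hf y hy).differentiableAt (hW.mem_nhds hy)
  obtain ⟨ε, hε, hεW⟩ := Metric.isOpen_iff.1 hW p hp
  set R : ℝ := ε / 2 / (‖v‖ + 1) with hR
  have hR0 : 0 < R := by positivity
  have hmem : ∀ x ∈ ball p (ε / 2), ∀ w ∈ closedBall (0:ℂ) R, x + w • v ∈ W := by
    intro x hx w hw
    apply hεW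
    have h1 : ‖w • v‖ ≤ ε / 2 := by
      rw [norm_smul]
      rw [mem_closedBall, dist_zero_right, hR, le_div_iff₀ (by positivity)] at hw
      nlinarith [norm_nonneg w]
    rw [mem_ball] at hx ⊢
    have := dist_triangle (x + w • v) x p
    rw [dist_self_add_left] at this
    linarith
  have key := aux_param hW hf
    (a := fun θ => deriv (circleMap 0 R) θ * (1 / (circleMap 0 R θ - 0) ^ 2))
    (A := fun _ => ContinuousLinearMap.id ℂ E) (c := fun θ => circleMap 0 R θ • v)
    (l := 0) (u := 2 * Real.pi) (by
      have : ∀ θ, circleMap 0 R θ - 0 ≠ 0 := fun θ => by simp [hR0.ne']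
      simp only [deriv_circleMap]
      refine Continuous.mul (by fun_prop) (Continuous.div (by fun_prop) (by fun_prop) fun θ => pow_ne_zero _ (this θ)))
    continuous_const (by fun_prop) p
    (fun t _ => hmem p (mem_ball_self (by positivity)) _ (by simp [abs_of_pos hR0]))
  have hev : (fun x => fderiv ℂ f x v) =ᶠ[𝓝 p] fun x => (2 * Real.pi * Complex.I)⁻¹ *
      ∫ θ in (0:ℝ)..(2 * Real.pi), (deriv (circleMap 0 R) θ * (1 / (circleMap 0 R θ - 0) ^ 2)) *
        f ((ContinuousLinearMap.id ℂ E) x + circleMap 0 R θ • v) := by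
    filter_upwards [ball_mem_nhds p (half_pos hε)] with x hx
    have hd : DifferentiableOn ℂ (fun w : ℂ => f (x + w • v)) (closedBall 0 R) := fun w hw =>
      (aux_deriv (hfd _ (hmem x hx w hw))).differentiableAt.differentiableWithinAt
    have h := hd.deriv_eq_smul_circleIntegral hR0
    have h2 := (aux_deriv (f := f) (x := x) (v := v) (w := 0)
      (hfd _ (hmem x hx 0 (mem_closedBall_self hR0.le)))).deriv
    rw [h2, circleIntegral] at h
    simp only [zero_smul, add_zero, smul_eq_mul] at h
    rw [eq_inv_mul_iff_mul_eq₀ (by simp [Real.pi_ne_zero]), ← h]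
    simp only [ContinuousLinearMap.id_apply, mul_assoc]
  exact (key.differentiableAt.const_mul _).congr_of_eventuallyEq hev

theorem aux_fderiv_cont {E : Type*} [NormedAddCommGroup E] [NormedSpace ℂ E] [FiniteDimensional ℂ E]
    {W : Set E} (hW : IsOpen W) {f : E → ℂ} (hf : DifferentiableOn ℂ f W) :
    ContinuousOn (fderiv ℂ f) W :=
  continuousOn_clm_apply.2 fun v => (aux_fderiv hW hf v).continuousOn

theorem aux_fderiv_diff {E : Type*} [NormedAddCommGroup E] [NormedSpace ℂ E]
    [FiniteDimensional ℂ E]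
    {W : Set E} (hW : IsOpen W) {f : E → ℂ} (hf : DifferentiableOn ℂ f W) :
    DifferentiableOn ℂ (fderiv ℂ f) W := by
  let e : (E →L[ℂ] ℂ) ≃L[ℂ] Fin (Module.finrank ℂ E) → ℂ :=
    ((ContinuousLinearEquiv.ofFinrankEq (Module.finrank_fin_fun ℂ).symm).arrowCongr
      (1 : ℂ ≃L[ℂ] ℂ)).trans (ContinuousLinearEquiv.piRing _)
  rw [← e.comp_differentiableOn_iff]
  exact differentiableOn_pi.2 fun i => aux_fderiv hW hf _

theorem aux_symm {E : Type*} [NormedAddCommGroup E] [NormedSpace ℂ E] [FiniteDimensional ℂ E]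
    {W : Set E} (hW : IsOpen W) {f : E → ℂ} (hf : DifferentiableOn ℂ f W) {x : E} (hx : x ∈ W)
    (v w : E) :
    fderiv ℂ (fun y => fderiv ℂ f y v) x w = fderiv ℂ (fun y => fderiv ℂ f y w) x v := by
  have hd : DifferentiableAt ℂ (fderiv ℂ f) x :=
    (aux_fderiv_diff hW hf x hx).differentiableAt (hW.mem_nhds hx)
  have h := second_derivative_symmetric_of_eventually (f := f) (f' := fderiv ℂ f) (x := x)
    (by filter_upwards [hW.mem_nhds hx] with y hy
        exact ((hf y hy).differentiableAt (hW.mem_nhds hy)).hasFDerivAt) hd.hasFDerivAt v w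
  have h1 : ∀ v w : E, fderiv ℂ (fun y => fderiv ℂ f y v) x w = fderiv ℂ (fderiv ℂ f) x w v := by
    intro v w
    have := (hd.hasFDerivAt.clm_apply (hasFDerivAt_const v x)).fderiv
    rw [this]; simp
  rw [h1, h1, h]

/-- The contraction toward the diagonal. -/
noncomputable def AA (n : ℕ) (t : ℝ) : Pt n →L[ℂ] Pt n :=
  (ContinuousLinearMap.snd ℂ (Fin n → ℂ) (Fin n → ℂ) +
    (t : ℂ) • (ContinuousLinearMap.fst ℂ (Fin n → ℂ) (Fin n → ℂ) -
      ContinuousLinearMap.snd ℂ (Fin n → ℂ) (Fin n → ℂ))).prod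
    (ContinuousLinearMap.snd ℂ (Fin n → ℂ) (Fin n → ℂ))

theorem AA_apply (n : ℕ) (t : ℝ) (x : Pt n) : AA n t x = (x.2 + t • (x.1 - x.2), x.2) := by
  simp [AA]

theorem AA_cont (n : ℕ) : Continuous (AA n) := by
  refine continuous_clm_apply.2 fun x => ?_
  simp only [AA_apply]
  fun_prop

theorem AA_mem {n : ℕ} {U : Set (Fin n → ℂ)} (hU : Convex ℝ U) {x : Pt n} (hx : x ∈ U ×ˢ U)
    {t : ℝ} (ht : t ∈ uIcc (0:ℝ) 1) : AA n t x ∈ U ×ˢ U := by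
  rw [uIcc_of_le zero_le_one] at ht
  rw [AA_apply]
  exact ⟨hU.add_smul_sub_mem hx.2 hx.1 ht, hx.2⟩

/-- The elementary integral operator. -/
noncomputable def HH (n m : ℕ) (k : Fin n) (f : Pt n → ℂ) (x : Pt n) : ℂ :=
  ∫ t in (0:ℝ)..1, (t : ℂ) ^ m * pd n k f (AA n t x)

theorem HH_deriv {n : ℕ} {U : Set (Fin n → ℂ)} (hUo : IsOpen U) (hU : Convex ℝ U) (m : ℕ)
    (k : Fin n) {f : Pt n → ℂ} (hf : DifferentiableOn ℂ f (U ×ˢ U)) {x : Pt n} (hx : x ∈ U ×ˢ U) :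
    HasFDerivAt (HH n m k f)
      (∫ t in (0:ℝ)..1, (t : ℂ) ^ m • (fderiv ℂ (pd n k f) (AA n t x)).comp (AA n t)) x := by
  have := aux_param (hUo.prod hUo) (aux_fderiv (hUo.prod hUo) hf (Pi.single k 1, 0))
    (a := fun t => (t : ℂ) ^ m) (by fun_prop) (AA_cont n) (c := fun _ => 0) continuous_const
    (l := 0) (u := 1) x (fun t ht => by simpa using AA_mem hU hx ht)
  simp only [add_zero] at this
  exact this

theorem HH_symm {n : ℕ} {U : Set (Fin n → ℂ)} (hUo : IsOpen U) (hU : Convex ℝ U) (m : ℕ)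
    (j k : Fin n) {f : Pt n → ℂ} (hf : DifferentiableOn ℂ f (U ×ˢ U)) {x : Pt n}
    (hx : x ∈ U ×ˢ U) : pd n j (HH n m k f) x = pd n k (HH n m j f) x := by
  have hW := hUo.prod hUo
  have h : ∀ j k : Fin n, pd n j (HH n m k f) x =
      ∫ t in (0:ℝ)..1, (t : ℂ) ^ m * ((t : ℂ) * pd n j (pd n k f) (AA n t x)) := by
    intro j k
    rw [pd, (HH_deriv hUo hU m k hf hx).fderiv, ContinuousLinearMap.intervalIntegral_apply]
    · refine intervalIntegral.integral_congr fun t ht => ?_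
      have : AA n t (Pi.single j 1, 0) = (t : ℂ) • ((Pi.single j 1, 0) : Pt n) := by
        rw [AA_apply]; ext i <;> simp
      simp only [ContinuousLinearMap.smul_apply, ContinuousLinearMap.comp_apply, this, map_smul,
        smul_eq_mul, pd]
    · refine ContinuousOn.intervalIntegrable ?_
      have h1 : ContinuousOn (fun t => fderiv ℂ (pd n k f) (AA n t x)) (uIcc (0:ℝ) 1) :=
        (aux_fderiv_cont hW (aux_fderiv hW hf (Pi.single k 1, 0))).comp
          ((AA_cont n).clm_apply continuous_const).continuousOn fun t ht => AA_mem hU hx ht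
      have h0 : ContinuousOn (fun t : ℝ => (t : ℂ) ^ m) (uIcc (0:ℝ) 1) := by fun_prop
      exact ContinuousOn.smul h0 (h1.clm_comp (AA_cont n).continuousOn)
  rw [h, h]
  refine intervalIntegral.integral_congr fun t ht => ?_
  have := aux_symm hW hf (AA_mem hU hx ht) (Pi.single k 1, 0) (Pi.single j 1, 0)
  exact congrArg (fun y : ℂ => (t : ℂ) ^ m * ((t : ℂ) * y)) this

theorem sgn_anti_lt {n : ℕ} {J : Finset (Fin n)} {j k : Fin n} (hj : j ∈ J) (h : j < k) :
    sgn n j (J.erase j) * sgn n k ((J.erase j).erase k) =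
      - (sgn n k (J.erase k) * sgn n j ((J.erase k).erase j)) := by
  have h1 : (J.erase j).filter (fun i => i < j) =
      ((J.erase k).erase j).filter (fun i => i < j) := by
    ext i; simp only [Finset.mem_filter, Finset.mem_erase]
    constructor
    · rintro ⟨⟨a, b⟩, c⟩; exact ⟨⟨a, (c.trans h).ne, b⟩, c⟩
    · rintro ⟨⟨a, _, b⟩, c⟩; exact ⟨⟨a, b⟩, c⟩
  have h2 : (J.erase k).filter (fun i => i < k) =
      insert j (((J.erase j).erase k).filter (fun i => i < k)) := by
    ext i; simp only [Finset.mem_filter, Finset.mem_erase, Finset.mem_insert]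
    by_cases hi : i = j
    · subst hi; simp [hj, h, h.ne]
    · simp [hi]
  have h3 : j ∉ ((J.erase j).erase k).filter (fun i => i < k) := by simp
  simp only [sgn]
  rw [h1, h2, Finset.card_insert_of_notMem h3]
  ring

theorem sgn_anti {n : ℕ} {J : Finset (Fin n)} {j k : Fin n} (hj : j ∈ J) (hk : k ∈ J)
    (h : j ≠ k) : sgn n j (J.erase j) * sgn n k ((J.erase j).erase k) =
      - (sgn n k (J.erase k) * sgn n j ((J.erase k).erase j)) := by
  rcases lt_or_gt_of_ne h with h | h
  · exact sgn_anti_lt hj h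
  · rw [sgn_anti_lt hk h, neg_neg]

theorem P_eq (n : ℕ) (ω : Coeff n) (J : Finset (Fin n)) :
    P n ω J = fun x => ∑ j ∈ J, sgn n j (J.erase j) * HH n (J.card - 1) j (ω (J.erase j)) x := by
  funext x
  simp only [P, HH, AA_apply]

theorem main_aux (n : ℕ)
    (U : Set (Fin n → ℂ)) (hUo : IsOpen U) (hU : Convex ℝ U)
    (ω : Coeff n) (hω : ∀ I : Finset (Fin n), DifferentiableOn ℂ (ω I) (U ×ˢ U))
    (J : Finset (Fin n)) (p : Pt n) (hp : p ∈ U ×ˢ U) : P n (P n ω) J p = 0 := by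
  have hW := hUo.prod hUo
  have hHd : ∀ m k I, DifferentiableOn ℂ (HH n m k (ω I)) (U ×ˢ U) := fun m k I x hx =>
    (HH_deriv hUo hU m k (hω I) hx).differentiableAt.differentiableWithinAt
  set T : Fin n → Fin n → ℂ := fun j k => ∫ s in (0:ℝ)..1, (s : ℂ) ^ (J.card - 1) *
    pd n j (HH n (J.card - 1 - 1) k (ω ((J.erase j).erase k))) (AA n s p) with hT
  have hTs : ∀ j k, T j k = T k j := by
    intro j k
    refine intervalIntegral.integral_congr fun s hs => ?_
    beta_reduce
    rw [HH_symm hUo hU _ j k (hω _) (AA_mem hU hp hs), Finset.erase_right_comm]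
  have hexp : P n (P n ω) J p = ∑ j ∈ J, ∑ k ∈ J.erase j,
      sgn n j (J.erase j) * sgn n k ((J.erase j).erase k) * T j k := by
    rw [P_eq]
    refine Finset.sum_congr rfl fun j hj => ?_
    simp only [mul_assoc]
    rw [← Finset.mul_sum]
    congr 1
    have hpd : ∀ x ∈ U ×ˢ U, pd n j (P n ω (J.erase j)) x = ∑ k ∈ J.erase j,
        sgn n k ((J.erase j).erase k) *
          pd n j (HH n (J.card - 1 - 1) k (ω ((J.erase j).erase k))) x := by
      intro x hx
      rw [P_eq, Finset.card_erase_of_mem hj]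
      have hs := HasFDerivAt.fun_sum (u := J.erase j) (fun k _ =>
        (((hHd (J.card - 1 - 1) k ((J.erase j).erase k) x hx).differentiableAt
          (hW.mem_nhds hx)).hasFDerivAt.const_mul (sgn n k ((J.erase j).erase k))))
      rw [pd, hs.fderiv]
      simp [pd]
    rw [HH]
    simp only [hT]
    simp only [← intervalIntegral.integral_const_mul]
    rw [← intervalIntegral.integral_finsetSum]
    · refine intervalIntegral.integral_congr fun s hs => ?_
      beta_reduce
      rw [hpd _ (AA_mem hU hp hs), Finset.mul_sum]
      exact Finset.sum_congr rfl fun k _ => by ring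
    · intro k _
      refine ContinuousOn.intervalIntegrable ?_
      have h1 : ContinuousOn (fun s => pd n j (HH n (J.card - 1 - 1) k
          (ω ((J.erase j).erase k))) (AA n s p)) (uIcc (0:ℝ) 1) :=
        (aux_fderiv hW (hHd _ k _) (Pi.single j 1, 0)).continuousOn.comp
          ((AA_cont n).clm_apply continuous_const).continuousOn fun t ht => AA_mem hU hp ht
      exact continuousOn_const.mul (ContinuousOn.mul (by fun_prop) h1)
  rw [hexp]
  set g : Fin n → Fin n → ℂ := fun j k => if k = j then 0 else
    sgn n j (J.erase j) * sgn n k ((J.erase j).erase k) * T j k with hg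
  have h1 : ∑ j ∈ J, ∑ k ∈ J.erase j,
      sgn n j (J.erase j) * sgn n k ((J.erase j).erase k) * T j k = ∑ j ∈ J, ∑ k ∈ J, g j k := by
    refine Finset.sum_congr rfl fun j hj => ?_
    rw [← Finset.add_sum_erase J (g j) hj]
    have : g j j = 0 := by simp [hg]
    rw [this, zero_add]
    refine Finset.sum_congr rfl fun k hk => ?_
    simp only [hg, if_neg (Finset.ne_of_mem_erase hk)]
  have h2 : ∑ j ∈ J, ∑ k ∈ J, g j k = - ∑ j ∈ J, ∑ k ∈ J, g j k := by
    conv_lhs => rw [Finset.sum_comm]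
    simp only [← Finset.sum_neg_distrib]
    refine Finset.sum_congr rfl fun j hj => Finset.sum_congr rfl fun k hk => ?_
    by_cases h : j = k
    · simp [hg, h]
    · simp only [hg, if_neg h, if_neg (Ne.symm h)]
      rw [sgn_anti hk hj (Ne.symm h), hTs k j]
      ring
  rw [h1]
  exact self_eq_neg.1 h2

/-- `P ∘ P = 0` as an operator `K^{-q} → K^{-q-2}`,
for every `0 ≤ q ≤ n`. -/
theorem statement1 (n : ℕ) (hn : 1 ≤ n)
    (U : Set (Fin n → ℂ)) (hUopen : IsOpen U) (hUconv : Convex ℝ U)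
    (hUne : U.Nonempty)
    (q : ℕ) (hq : q ≤ n) (ω : Coeff n) (hω : MemK n U q ω) :
    ∀ J : Finset (Fin n), ∀ p ∈ U ×ˢ U, P n (P n ω) J p = 0 := by
  intro J p hp
  exact main_aux n U hUopen hUconv ω hω.2 J p hp

end TwistedKoszul
end

section
/- The maps Φ^{−q} form a chain map from the bar complex of A = O(U) to the Koszul complex: for every q ≥ 1 and all f₀, f₁, …, f_{q+1} ∈ A, d_K(Φ^{−q}(f₀ ⊗ f₁ ⊗ … ⊗ f_{q+1})) = Φ^{−(q−1)}(∂(f₀ ⊗ f₁ ⊗ … ⊗ f_{q+1})). -/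
/-!
Setting: `n ≥ 1`, `U ⊆ ℂⁿ` a nonempty convex open set.  Points of `U × U` are
written `p = (z, ζ)` with `z = p.1`, `ζ = p.2`.  For `0 ≤ q ≤ n`,
`K^{-q} = Λ^q(ℂⁿ) ⊗ O(U×U)` is encoded by the coefficients of its elements on
the basis `e^I`, where the strictly increasing multi-indices
`I = (i₁ < … < i_q)` are encoded as finsets `I ⊆ Fin n` of cardinality `q`.
-/

open scoped BigOperators

namespace TwistedKoszul

/-- The `i`-th face of the bar differential: merge the `i`-th and `(i+1)`-st
entries of a tensor `g₀ ⊗ … ⊗ g_m`, i.e.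
`g₀ ⊗ … ⊗ g_i g_{i+1} ⊗ … ⊗ g_m`.  The bar differential is
`∂(g) = Σ_{i=0}^{m-1} (-1)^i merge g i`. -/
def merge {A : Type*} [Mul A] {m : ℕ} (g : Fin (m + 1) → A) (i : Fin m) :
    Fin m → A := fun k =>
  if (k : ℕ) < (i : ℕ) then g k.castSucc
  else if k = i then g k.castSucc * g k.succ
  else g k.succ

/-- Replace the first and last entries of a tensor by `1`:
`f₀ ⊗ f₁ ⊗ … ⊗ f_q ⊗ f_{q+1} ↦ 1 ⊗ f₁ ⊗ … ⊗ f_q ⊗ 1`. -/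
def bord {n m : ℕ} (f : Fin (m + 2) → ((Fin n → ℂ) → ℂ)) :
    Fin (m + 2) → ((Fin n → ℂ) → ℂ) := fun k =>
  if k = 0 then 1 else if k = Fin.last (m + 1) then 1 else f k

variable (n : ℕ)

/-- The chain map `Φ^{-q} : B^{-q} = A^{⊗(q+2)} → K^{-q}` from the bar complex
of `A = O(U)` to the Koszul complex, defined on pure tensors by
`Φ^0(f₀ ⊗ f₁)(z, ζ) = f₀(z) f₁(ζ)` and
`Φ^{-q}(f₀ ⊗ … ⊗ f_{q+1}) = f₀(z) f_{q+1}(ζ) · P(Φ^{-(q-1)}(∂(1 ⊗ f₁ ⊗ … ⊗ f_q ⊗ 1)))`. -/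
noncomputable def Phi : (q : ℕ) → (Fin (q + 2) → ((Fin n → ℂ) → ℂ)) → Coeff n
  | 0, f => ofFun n (fun p => f 0 p.1 * f 1 p.2)
  | q + 1, f => fun J p =>
      f 0 p.1 * f (Fin.last (q + 2)) p.2 *
        P n (fun J' p' => ∑ i : Fin (q + 2), (-1 : ℂ) ^ (i : ℕ) *
          Phi q (merge (bord f) i) J' p') J p

end TwistedKoszul

namespace TwistedKoszul

section Analytic
open MeasureTheory Metric Set Filter Topology

variable {E F : Type*} [NormedAddCommGroup E] [NormedSpace ℂ E]
  [NormedAddCommGroup F] [NormedSpace ℂ F] [FiniteDimensional ℂ F]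

theorem aux_param_s7 {V : Set F} (hV : IsOpen V) {g : F → ℂ} (hg : DifferentiableOn ℂ g V)
    (c : ℝ → ℂ) (hc : Continuous c) (A : ℝ → E →L[ℂ] F) (hA : Continuous A)
    (b : ℝ → F) (hb : Continuous b) (l u : ℝ) (x₀ : E)
    (hx : ∀ t ∈ uIcc l u, A t x₀ + b t ∈ V) :
    DifferentiableAt ℂ (fun x => ∫ t in l..u, c t * g (A t x + b t)) x₀ := by
  have : ProperSpace F := FiniteDimensional.proper ℂ F
  have hγ : Continuous (fun t => A t x₀ + b t) := (hA.clm_apply continuous_const).add hb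
  have hK : IsCompact ((fun t => A t x₀ + b t) '' uIcc l u) :=
    isCompact_uIcc.image hγ
  set K := (fun t => A t x₀ + b t) '' uIcc l u with hKdef
  have hKV : K ⊆ V := by rintro _ ⟨t, ht, rfl⟩; exact hx t ht
  obtain ⟨δ, hδ, hδV⟩ := hK.exists_cthickening_subset_open hV hKV
  have hKc : IsCompact (cthickening δ K) := hK.cthickening
  obtain ⟨C, hC⟩ := hKc.exists_bound_of_continuousOn (hg.continuousOn.mono hδV)
  obtain ⟨M, hM⟩ := (isCompact_uIcc (a := l) (b := u)).exists_bound_of_continuousOn hA.continuousOn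
  obtain ⟨D, hD⟩ := (isCompact_uIcc (a := l) (b := u)).exists_bound_of_continuousOn hc.continuousOn
  have hM0 : 0 ≤ M := (norm_nonneg _).trans (hM l left_mem_uIcc)
  have hD0 : 0 ≤ D := (norm_nonneg _).trans (hD l left_mem_uIcc)
  set r : ℝ := δ / 2 / (M + 1) with hr
  have hr0 : 0 < r := by positivity
  have hsub : ∀ y, ∀ k ∈ K, dist y k ≤ δ → y ∈ cthickening δ K := fun y k hk h =>
    mem_cthickening_of_dist_le y k δ K hk h
  have hnear : ∀ t ∈ uIcc l u, ∀ x ∈ ball x₀ r, dist (A t x + b t) (A t x₀ + b t) ≤ δ / 2 := by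
    intro t ht x hx'
    rw [dist_add_right, dist_eq_norm, ← map_sub]
    refine ((A t).le_opNorm _).trans ?_
    have h1 : ‖x - x₀‖ ≤ r := by rw [← dist_eq_norm]; exact (mem_ball.1 hx').le
    calc ‖A t‖ * ‖x - x₀‖ ≤ (M + 1) * r := by
          gcongr; linarith [hM t ht]
      _ = δ / 2 := by rw [hr]; field_simp
  have hmem : ∀ t ∈ uIcc l u, ∀ x ∈ ball x₀ r, A t x + b t ∈ V := fun t ht x hx' =>
    hδV (hsub _ _ ⟨t, ht, rfl⟩ ((hnear t ht x hx').trans (by linarith)))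
  have hfd : ∀ t ∈ uIcc l u, ∀ x ∈ ball x₀ r,
      ‖fderiv ℂ g (A t x + b t)‖ ≤ (2 * C + 1) / (δ / 2) := by
    intro t ht x hx'
    have hball : ball (A t x + b t) (δ / 2) ⊆ cthickening δ K := by
      intro y hy
      refine hsub y _ ⟨t, ht, rfl⟩ ?_
      have := dist_triangle y (A t x + b t) (A t x₀ + b t)
      have := hnear t ht x hx'
      have := mem_ball.1 hy
      simp only
      linarith
    refine Complex.norm_fderiv_le_div_of_mapsTo_ball (hg.mono (hball.trans hδV)) ?_ (by positivity)
    intro y hy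
    first
      | rw [mem_ball, dist_eq_norm]
      | rw [mem_closedBall, dist_eq_norm]
    have h1 := hC _ (hball hy)
    have h2 := hC _ (hball (mem_ball_self (by positivity : (0:ℝ) < δ / 2)))
    have h3 := norm_sub_le (g y) (g (A t x + b t))
    linarith
  borelize F
  have hcont : ∀ x ∈ ball x₀ r, ContinuousOn (fun t => c t * g (A t x + b t)) (uIcc l u) := by
    intro x hx'
    refine hc.continuousOn.mul (hg.continuousOn.comp
      ((hA.clm_apply continuous_const).add hb).continuousOn (fun t ht => hmem t ht x hx'))
  have hIoc : ∀ t ∈ Set.uIoc l u, t ∈ uIcc l u := fun t ht => uIoc_subset_uIcc ht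
  have key := intervalIntegral.hasFDerivAt_integral_of_dominated_of_fderiv_le (𝕜 := ℂ)
    (μ := volume) (a := l) (b := u) (s := ball x₀ r)
    (F := fun x t => c t * g (A t x + b t))
    (F' := fun x t => c t • (fderiv ℂ g (A t x + b t)).comp (A t)) (x₀ := x₀)
    (bound := fun _ => D * ((2 * C + 1) / (δ / 2) * M))
    (ball_mem_nhds _ hr0) ?_ ?_ ?_ ?_ ?_ ?_
  · exact key.differentiableAt
  · filter_upwards [ball_mem_nhds x₀ hr0] with x hx'
    exact ((hcont x hx').mono uIoc_subset_uIcc).aestronglyMeasurable measurableSet_uIoc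
  · exact (hcont x₀ (mem_ball_self hr0)).intervalIntegrable
  · refine AEStronglyMeasurable.smul hc.aestronglyMeasurable ?_
    have h1 : AEStronglyMeasurable (fun t => fderiv ℂ g (A t x₀ + b t))
        (volume.restrict (Set.uIoc l u)) :=
      ((measurable_fderiv ℂ g).comp hγ.measurable).aestronglyMeasurable
    have h2 : AEStronglyMeasurable A (volume.restrict (Set.uIoc l u)) := hA.aestronglyMeasurable
    exact ((ContinuousLinearMap.compL ℂ E F ℂ).continuous₂).comp_aestronglyMeasurable (h1.prodMk h2)
  · refine Eventually.of_forall fun t ht x hx' => ?_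
    rw [norm_smul]
    have h1 := hfd t (hIoc t ht) x hx'
    have h2 := hM t (hIoc t ht)
    have h3 := hD t (hIoc t ht)
    have h4 := ContinuousLinearMap.opNorm_comp_le (fderiv ℂ g (A t x + b t)) (A t)
    have h5 : 0 ≤ (2 * C + 1) / (δ / 2) := (norm_nonneg _).trans h1
    refine mul_le_mul h3 (h4.trans ?_) (norm_nonneg _) hD0
    exact mul_le_mul h1 h2 (norm_nonneg _) h5
  · exact intervalIntegrable_const
  · refine Eventually.of_forall fun t ht x hx' => ?_
    have h1 : HasFDerivAt g (fderiv ℂ g (A t x + b t)) (A t x + b t) :=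
      (hg.differentiableAt (hV.mem_nhds (hmem t (hIoc t ht) x hx'))).hasFDerivAt
    have h2 : HasFDerivAt (fun x => A t x + b t) (A t) x := (A t).hasFDerivAt.add_const _
    exact (h1.comp x h2).const_mul (c t)

theorem aux_fderiv_s7 {V : Set F} (hV : IsOpen V) {g : F → ℂ} (hg : DifferentiableOn ℂ g V)
    (v : F) : DifferentiableOn ℂ (fun x => fderiv ℂ g x v) V := by
  intro x₀ hx₀
  refine DifferentiableAt.differentiableWithinAt ?_
  obtain ⟨ε, hε, hεV⟩ := Metric.isOpen_iff.1 hV x₀ hx₀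
  set R : ℝ := ε / 2 / (‖v‖ + 1) with hR
  have hR0 : 0 < R := by positivity
  have hmem : ∀ x ∈ ball x₀ (ε / 2), ∀ w : ℂ, ‖w‖ ≤ R → x + w • v ∈ V := by
    intro x hx w hw
    apply hεV
    rw [mem_ball, dist_eq_norm]
    have h1 : ‖w • v‖ ≤ ε / 2 := by
      rw [norm_smul]
      calc ‖w‖ * ‖v‖ ≤ R * (‖v‖ + 1) := by gcongr; linarith
        _ = ε / 2 := by rw [hR]; field_simp
    have h2 : ‖x - x₀‖ < ε / 2 := by rw [← dist_eq_norm]; exact hx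
    calc ‖x + w • v - x₀‖ = ‖(x - x₀) + w • v‖ := by congr 1; abel
      _ ≤ _ := norm_add_le _ _
      _ < ε := by linarith
  have hmain := aux_param_s7 (E := F) hV hg
    (fun θ => (2 * Real.pi * Complex.I : ℂ)⁻¹ * (deriv (circleMap 0 R) θ * (1 / (circleMap 0 R θ) ^ 2)))
    ?_ (fun _ => ContinuousLinearMap.id ℂ F) continuous_const
    (fun θ => circleMap 0 R θ • v) ((continuous_circleMap 0 R).smul continuous_const)
    0 (2 * Real.pi) x₀ ?_
  · refine hmain.congr_of_eventuallyEq ?_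
    filter_upwards [ball_mem_nhds x₀ (half_pos hε)] with x hx
    have hd : DifferentiableOn ℂ (fun w : ℂ => g (x + w • v)) (closedBall 0 R) := by
      intro w hw
      have h1 := hg.differentiableAt (hV.mem_nhds (hmem x hx w (by simpa using hw)))
      have h2 : DifferentiableAt ℂ (fun w : ℂ => x + w • v) w := by fun_prop
      exact (DifferentiableAt.comp w h1 h2).differentiableWithinAt
    have h3 := hd.deriv_eq_smul_circleIntegral hR0
    have h4 : deriv (fun w : ℂ => g (x + w • v)) 0 = fderiv ℂ g x v := by
      have h1 := hg.differentiableAt (hV.mem_nhds (hmem x hx 0 (by simpa using hR0.le)))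
      have h2 : HasDerivAt (fun w : ℂ => x + w • v) v 0 := by
        simpa using ((hasDerivAt_id (0:ℂ)).smul_const v).const_add x
      have h5 := h1.hasFDerivAt.comp_hasDerivAt (0:ℂ) h2
      simpa [Function.comp_def] using h5.deriv
    rw [h4] at h3
    have hpi : (2 * Real.pi * Complex.I : ℂ) ≠ 0 := Complex.two_pi_I_ne_zero
    have h6 : fderiv ℂ g x v = (2 * Real.pi * Complex.I : ℂ)⁻¹ *
        ∮ z in C(0, R), (1 / (z - 0) ^ 2) • g (x + z • v) := by
      rw [h3, smul_eq_mul, inv_mul_cancel_left₀ hpi]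
    rw [h6, circleIntegral, ← intervalIntegral.integral_const_mul]
    congr 1
    ext θ
    simp only [sub_zero, smul_eq_mul, ContinuousLinearMap.id_apply]
    ring
  · have h0 : ∀ θ, circleMap 0 R θ ≠ 0 := fun θ => by
      exact circleMap_ne_center (c := 0) hR0.ne' (θ := θ)
    have : Continuous (circleMap 0 R) := continuous_circleMap 0 R
    simp only [deriv_circleMap]
    refine continuous_const.mul ((this.mul continuous_const).mul
      (continuous_const.div (this.pow 2) fun θ => pow_ne_zero 2 (h0 θ)))
  · intro θ _
    exact hmem x₀ (mem_ball_self (half_pos hε)) _ (by simp [abs_of_pos hR0])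

end Analytic

section Comb

theorem merge_merge {A : Type*} [Semigroup A] {m : ℕ} (g : Fin (m + 2) → A) (a b : Fin m)
    (hab : a ≤ b) :
    merge (merge g a.castSucc) b = merge (merge g b.succ) a := by
  ext k
  rw [Fin.le_def] at hab
  simp only [merge, Fin.ext_iff, Fin.val_castSucc, Fin.val_succ]
  split_ifs <;> first | rfl | omega | (rw [mul_assoc]; rfl)

theorem merge_sum {A : Type*} [Semigroup A] {m : ℕ} (g : Fin (m + 2) → A)
    (F : (Fin m → A) → ℂ) :
    ∑ i : Fin (m + 1), (-1 : ℂ) ^ (i : ℕ) * ∑ j : Fin m, (-1 : ℂ) ^ (j : ℕ) *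
      F (merge (merge g i) j) = 0 := by
  simp_rw [Finset.mul_sum]
  rw [← Fintype.sum_prod_type' (fun (i : Fin (m + 1)) (j : Fin m) => (-1 : ℂ) ^ (i : ℕ) *
    ((-1 : ℂ) ^ (j : ℕ) * F (merge (merge g i) j)))]
  refine Finset.sum_involution
    (fun x _ => if h : (x.2 : ℕ) < x.1 then (x.2.castSucc, ⟨x.1 - 1, by omega⟩)
      else (x.2.succ, ⟨x.1, by omega⟩)) ?_ ?_ ?_ ?_
  · rintro ⟨i, j⟩ _
    dsimp only
    split_ifs with h
    · have := merge_merge g j ⟨i - 1, by omega⟩ (by rw [Fin.le_def]; simp; omega)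
      have hi : (⟨i - 1, by omega⟩ : Fin m).succ = i := by ext; simp; omega
      rw [hi] at this
      rw [this]
      obtain ⟨c, hc⟩ : ∃ c, (i : ℕ) = c + 1 := ⟨i - 1, by omega⟩
      simp only [hc, Fin.val_castSucc, Nat.add_sub_cancel]
      ring
    · have := merge_merge g ⟨i, by omega⟩ j (by rw [Fin.le_def]; simp; omega)
      have hi : (⟨i, by omega⟩ : Fin m).castSucc = i := by ext; simp
      rw [hi] at this
      rw [this]
      simp only [Fin.val_succ]
      ring
  · rintro ⟨i, j⟩ _ _
    dsimp only
    split_ifs with h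
    · simp only [ne_eq, Prod.mk.injEq, Fin.ext_iff, Fin.val_castSucc]; omega
    · simp only [ne_eq, Prod.mk.injEq, Fin.ext_iff, Fin.val_succ]; omega
  · intros; exact Finset.mem_univ _
  · rintro ⟨i, j⟩ _
    dsimp only
    by_cases h : (j : ℕ) < i
    · rw [dif_pos h, dif_neg (by simp only [Fin.val_castSucc]; omega)]
      ext <;> simp only [Fin.val_castSucc, Fin.val_succ]
      omega
    · rw [dif_neg h, dif_pos (by simp only [Fin.val_succ]; omega)]
      ext <;> simp only [Fin.val_castSucc, Fin.val_succ]
      omega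

theorem merge_zero {n m : ℕ} (f : Fin (m + 3) → ((Fin n → ℂ) → ℂ)) (i : Fin (m + 2)) :
    merge f i 0 = f 0 * merge (bord f) i 0 := by
  simp only [merge, bord, Fin.ext_iff, Fin.val_castSucc, Fin.val_succ, Fin.val_zero, Fin.val_last]
  split_ifs <;> first | contradiction | omega | simp

theorem merge_last {n m : ℕ} (f : Fin (m + 3) → ((Fin n → ℂ) → ℂ)) (i : Fin (m + 2)) :
    merge f i (Fin.last (m + 1)) = f (Fin.last (m + 2)) * merge (bord f) i (Fin.last (m + 1)) := by
  have := i.2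
  simp only [merge, bord, Fin.ext_iff, Fin.val_castSucc, Fin.val_succ, Fin.val_zero, Fin.val_last]
  split_ifs <;> first | contradiction | omega | (simp [mul_comm]; done) | (rw [mul_one]; exact mul_comm _ _)

theorem bord_merge {n m : ℕ} (f : Fin (m + 3) → ((Fin n → ℂ) → ℂ)) (i : Fin (m + 2)) :
    bord (merge f i) = bord (merge (bord f) i) := by
  funext k
  have := i.2
  have := k.2
  simp only [merge, bord, Fin.ext_iff, Fin.val_castSucc, Fin.val_succ, Fin.val_zero, Fin.val_last]
  split_ifs <;> first | contradiction | omega | rfl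

theorem Phi_bilin (n q : ℕ) (f : Fin (q + 3) → ((Fin n → ℂ) → ℂ)) (i : Fin (q + 2))
    (J : Finset (Fin n)) (p : Pt n) :
    Phi n q (merge f i) J p =
      f 0 p.1 * f (Fin.last (q + 2)) p.2 * Phi n q (merge (bord f) i) J p := by
  have h0 := congrFun (merge_zero f i) p.1
  have h1 := congrFun (merge_last f i) p.2
  simp only [Pi.mul_apply] at h0 h1
  cases q with
  | zero =>
    simp only [Phi, ofFun]
    split_ifs
    · rw [show (1 : Fin 2) = Fin.last (0 + 1) from rfl]
      rw [h0, h1]; ring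
    · simp
  | succ q =>
    simp only [Phi]
    rw [h0, h1, bord_merge f i]
    ring

theorem sgn_rel (n : ℕ) (J : Finset (Fin n)) (j k : Fin n) (hj : j ∉ J) (hk : k ∈ J) :
    sgn n j J * sgn n k (insert j (J.erase k)) = - (sgn n k (J.erase k) * sgn n j (J.erase k)) := by
  have hjk : j ≠ k := fun h => hj (h ▸ hk)
  obtain ⟨L, hL, rfl⟩ : ∃ L, k ∉ L ∧ J = insert k L :=
    ⟨J.erase k, Finset.notMem_erase _ _, (Finset.insert_erase hk).symm⟩
  have hjL : j ∉ L := fun h => hj (Finset.mem_insert_of_mem h)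
  rw [Finset.erase_insert hL]
  simp only [sgn, Finset.filter_insert]
  rcases lt_or_gt_of_ne hjk with h | h
  · rw [if_neg (not_lt.2 h.le), if_pos h, Finset.card_insert_of_notMem (by simp [hjL])]
    ring
  · rw [if_pos h, if_neg (not_lt.2 h.le), Finset.card_insert_of_notMem (by simp [hL])]
    ring

theorem sgn_sq (n : ℕ) (J : Finset (Fin n)) (j : Fin n) : sgn n j J * sgn n j J = 1 := by
  simp only [sgn, ← mul_pow]; simp

end Comb

section Homotopy

open Set

variable {n : ℕ} {U : Set (Fin n → ℂ)}

theorem ii_sum {ι : Type*} (s : Finset ι) (φ : ι → ℝ → ℂ)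
    (h : ∀ i ∈ s, IntervalIntegrable (φ i) MeasureTheory.volume 0 1) :
    IntervalIntegrable (fun t => ∑ i ∈ s, φ i t) MeasureTheory.volume 0 1 := by
  have := IntervalIntegrable.sum s h
  rwa [Finset.sum_fn] at this

theorem path_mem (hUconv : Convex ℝ U) {p : Pt n} (hp : p ∈ U ×ˢ U) {t : ℝ}
    (ht : t ∈ Set.uIcc (0:ℝ) 1) : ((p.2 + t • (p.1 - p.2), p.2) : Pt n) ∈ U ×ˢ U := by
  rw [uIcc_of_le zero_le_one] at ht
  exact ⟨hUconv.add_smul_sub_mem hp.2 hp.1 ht, hp.2⟩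

theorem pd_diff (hUopen : IsOpen U) (j : Fin n) {g : Pt n → ℂ}
    (hg : DifferentiableOn ℂ g (U ×ˢ U)) : DifferentiableOn ℂ (pd n j g) (U ×ˢ U) :=
  aux_fderiv_s7 (hUopen.prod hUopen) hg _

theorem P_diff (hUopen : IsOpen U) (hUconv : Convex ℝ U) (ω : Coeff n)
    (hω : ∀ I, DifferentiableOn ℂ (ω I) (U ×ˢ U)) (J : Finset (Fin n)) :
    DifferentiableOn ℂ (P n ω J) (U ×ˢ U) := by
  unfold P
  refine DifferentiableOn.fun_sum fun j _ => DifferentiableOn.const_mul ?_ _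
  intro p hp
  refine DifferentiableAt.differentiableWithinAt ?_
  let fs := ContinuousLinearMap.fst ℂ (Fin n → ℂ) (Fin n → ℂ)
  let sn := ContinuousLinearMap.snd ℂ (Fin n → ℂ) (Fin n → ℂ)
  let B0 : Pt n →L[ℂ] Pt n := sn.prod sn
  let B1 : Pt n →L[ℂ] Pt n := (fs - sn).prod 0
  have hA : ∀ (t : ℝ) (x : Pt n), (B0 + (t : ℂ) • B1) x + 0 = (x.2 + t • (x.1 - x.2), x.2) := by
    intro t x
    ext i <;> simp [B0, B1, fs, sn]
  have := aux_param_s7 (hUopen.prod hUopen) (pd_diff hUopen j (hω (J.erase j)))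
    (fun t : ℝ => (t : ℂ) ^ (J.card - 1)) (by fun_prop)
    (fun t : ℝ => B0 + (t : ℂ) • B1) (by fun_prop) (fun _ => 0) continuous_const 0 1 p
    (fun t ht => by rw [hA]; exact path_mem hUconv hp ht)
  simpa only [hA] using this

theorem pd_dK (hUopen : IsOpen U) (ω : Coeff n)
    (hω : ∀ I, DifferentiableOn ℂ (ω I) (U ×ˢ U)) (k : Fin n) (I : Finset (Fin n))
    {y : Pt n} (hy : y ∈ U ×ˢ U) :
    pd n k (dK n ω I) y = ∑ j ∈ Iᶜ, sgn n j I * ((if j = k then ω (insert j I) y else 0) +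
      (y.1 j - y.2 j) * pd n k (ω (insert j I)) y) := by
  unfold pd
  have hd : ∀ j ∈ Iᶜ, HasFDerivAt
      (fun p : Pt n => sgn n j I * ((p.1 j - p.2 j) * ω (insert j I) p))
      (sgn n j I • ((y.1 j - y.2 j) • fderiv ℂ (ω (insert j I)) y + ω (insert j I) y •
        ((ContinuousLinearMap.proj j).comp (ContinuousLinearMap.fst ℂ (Fin n → ℂ) (Fin n → ℂ)) -
        (ContinuousLinearMap.proj j).comp (ContinuousLinearMap.snd ℂ (Fin n → ℂ) (Fin n → ℂ))))) y := by
    intro j _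
    have h1 : HasFDerivAt (ω (insert j I)) (fderiv ℂ (ω (insert j I)) y) y :=
      ((hω _).differentiableAt ((hUopen.prod hUopen).mem_nhds hy)).hasFDerivAt
    have h2 : HasFDerivAt (fun p : Pt n => p.1 j - p.2 j)
        (((ContinuousLinearMap.proj j).comp (ContinuousLinearMap.fst ℂ (Fin n → ℂ) (Fin n → ℂ)) -
        (ContinuousLinearMap.proj j).comp (ContinuousLinearMap.snd ℂ (Fin n → ℂ) (Fin n → ℂ))) :
          Pt n →L[ℂ] ℂ) y :=
      ContinuousLinearMap.hasFDerivAt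
        (((ContinuousLinearMap.proj j).comp (ContinuousLinearMap.fst ℂ (Fin n → ℂ) (Fin n → ℂ)) -
        (ContinuousLinearMap.proj j).comp (ContinuousLinearMap.snd ℂ (Fin n → ℂ) (Fin n → ℂ))) :
          Pt n →L[ℂ] ℂ)
    exact (h2.mul h1).const_mul _
  have h3 : HasFDerivAt (dK n ω I) _ y := HasFDerivAt.fun_sum hd
  rw [h3.fderiv, _root_.sum_apply]
  refine Finset.sum_congr rfl fun j _ => ?_
  simp only [_root_.smul_apply, _root_.add_apply,
    _root_.sub_apply, ContinuousLinearMap.comp_apply, ContinuousLinearMap.coe_fst',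
    ContinuousLinearMap.coe_snd', ContinuousLinearMap.proj_apply, smul_eq_mul, Pi.zero_apply,
    sub_zero, Pi.single_apply]
  split_ifs <;> ring

theorem homotopy (hUopen : IsOpen U) (hUconv : Convex ℝ U) (ω : Coeff n)
    (hω : ∀ I, DifferentiableOn ℂ (ω I) (U ×ˢ U)) (J : Finset (Fin n)) {p : Pt n}
    (hp : p ∈ U ×ˢ U) :
    dK n (P n ω) J p + P n (dK n ω) J p = ω J p - res n ω J p := by
  have hV : IsOpen (U ×ˢ U) := hUopen.prod hUopen
  set γ : ℝ → Pt n := fun t => (p.2 + t • (p.1 - p.2), p.2) with hγ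
  have hγm : ∀ t ∈ uIcc (0:ℝ) 1, γ t ∈ U ×ˢ U := fun t ht => path_mem hUconv hp ht
  have hγc : Continuous γ := by fun_prop
  have hGc : ∀ k L, ContinuousOn (fun t => pd n k (ω L) (γ t)) (uIcc (0:ℝ) 1) := fun k L =>
    (pd_diff hUopen k (hω L)).continuousOn.comp hγc.continuousOn hγm
  have hωc : ∀ L, ContinuousOn (fun t => ω L (γ t)) (uIcc (0:ℝ) 1) := fun L =>
    (hω L).continuousOn.comp hγc.continuousOn hγm
  have hpow : ∀ m : ℕ, ContinuousOn (fun t : ℝ => (t : ℂ) ^ m) (uIcc (0:ℝ) 1) := fun m => by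
    fun_prop
  have hIG : ∀ k L m, IntervalIntegrable (fun t : ℝ => (t : ℂ) ^ m * pd n k (ω L) (γ t))
      MeasureTheory.volume 0 1 := fun k L m => ((hpow m).mul (hGc k L)).intervalIntegrable
  have hIω : ∀ L m, IntervalIntegrable (fun t : ℝ => (t : ℂ) ^ m * ω L (γ t))
      MeasureTheory.volume 0 1 := fun L m => ((hpow m).mul (hωc L)).intervalIntegrable
  set x : Fin n → ℂ := fun j => p.1 j - p.2 j with hx
  set T : Fin n → Finset (Fin n) → ℂ := fun k L =>
    ∫ t in (0:ℝ)..1, (t : ℂ) ^ J.card * pd n k (ω L) (γ t) with hT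
  set W : ℂ := ∫ t in (0:ℝ)..1, (t : ℂ) ^ (J.card - 1) * ω J (γ t) with hW
  -- first term
  have e1 : dK n (P n ω) J p = ∑ j ∈ Jᶜ, x j * T j J -
      ∑ j ∈ Jᶜ, ∑ k ∈ J, sgn n k (J.erase k) * sgn n j (J.erase k) *
        (x j * T k (insert j (J.erase k))) := by
    rw [← Finset.sum_sub_distrib]
    unfold dK
    refine Finset.sum_congr rfl fun j hj => ?_
    have hj' : j ∉ J := by simpa using hj
    unfold P
    rw [Finset.sum_insert hj', Finset.erase_insert hj', Finset.card_insert_of_notMem hj',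
      Nat.add_sub_cancel, mul_add, mul_add]
    have a1 : sgn n j J * ((p.1 j - p.2 j) * (sgn n j J * T j J)) = x j * T j J := by
      linear_combination (x j * T j J) * sgn_sq n J j
    have a2 : sgn n j J * ((p.1 j - p.2 j) * ∑ k ∈ J, sgn n k ((insert j J).erase k) *
        T k ((insert j J).erase k)) = - ∑ k ∈ J, sgn n k (J.erase k) * sgn n j (J.erase k) *
        (x j * T k (insert j (J.erase k))) := by
      rw [Finset.mul_sum, Finset.mul_sum, ← Finset.sum_neg_distrib]
      refine Finset.sum_congr rfl fun k hk => ?_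
      have hjk : j ≠ k := fun h => hj' (h ▸ hk)
      rw [Finset.erase_insert_of_ne hjk]
      linear_combination (x j * T k (insert j (J.erase k))) * sgn_rel n J j k hj' hk
    exact (congrArg₂ (· + ·) a1 a2).trans (sub_eq_add_neg _ _).symm
  have e2 : P n (dK n ω) J p = ∑ k ∈ J, (W + x k * T k J) +
      ∑ j ∈ Jᶜ, ∑ k ∈ J, sgn n k (J.erase k) * sgn n j (J.erase k) *
        (x j * T k (insert j (J.erase k))) := by
    rw [Finset.sum_comm, ← Finset.sum_add_distrib]
    unfold P
    refine Finset.sum_congr rfl fun k hk => ?_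
    have hcard : J.card - 1 + 1 = J.card := Nat.sub_add_cancel (Finset.card_pos.2 ⟨k, hk⟩)
    have hcompl : (J.erase k)ᶜ = insert k Jᶜ := Finset.compl_erase
    have hkJ : k ∉ Jᶜ := by simpa using hk
    have hint : ∫ t in (0:ℝ)..1, (t : ℂ) ^ (J.card - 1) *
        pd n k (dK n ω (J.erase k)) (p.2 + t • (p.1 - p.2), p.2) =
        ∫ t in (0:ℝ)..1, (sgn n k (J.erase k) * ((t : ℂ) ^ (J.card - 1) * ω J (γ t) +
          x k * ((t : ℂ) ^ J.card * pd n k (ω J) (γ t))) + ∑ j ∈ Jᶜ, sgn n j (J.erase k) *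
          (x j * ((t : ℂ) ^ J.card * pd n k (ω (insert j (J.erase k))) (γ t)))) := by
      refine intervalIntegral.integral_congr fun t ht => ?_
      have hg : ∀ j, (γ t).1 j - (γ t).2 j = t * x j := fun j => by simp [hγ, hx]
      have := pd_dK hUopen ω hω k (J.erase k) (hγm t ht)
      simp only [hg] at this
      change (t : ℂ) ^ (J.card - 1) * pd n k (dK n ω (J.erase k)) (γ t) = _
      rw [this, hcompl, Finset.sum_insert hkJ, Finset.insert_erase hk, if_pos rfl, mul_add,
        Finset.mul_sum]
      congr 1
      · rw [← hcard, pow_succ]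
        simp only [Nat.add_sub_cancel]
        ring
      · refine Finset.sum_congr rfl fun j hj => ?_
        have hjk : j ≠ k := fun h => hkJ (h ▸ hj)
        rw [if_neg hjk]
        nth_rewrite 2 [← hcard]
        rw [pow_succ]
        ring
    rw [hint, intervalIntegral.integral_add, intervalIntegral.integral_const_mul,
      intervalIntegral.integral_add, intervalIntegral.integral_const_mul,
      intervalIntegral.integral_finsetSum]
    · simp only [intervalIntegral.integral_const_mul]
      rw [mul_add, ← mul_assoc, sgn_sq, one_mul, Finset.mul_sum]
      congr 1
      refine Finset.sum_congr rfl fun j _ => ?_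
      ring
    · exact fun j _ => ((hIG _ _ _).const_mul _).const_mul _
    · exact hIω _ _
    · exact (hIG _ _ _).const_mul _
    · exact ((hIω _ _).add ((hIG _ _ _).const_mul _)).const_mul _
    · exact ii_sum _ _ fun j _ => ((hIG _ _ _).const_mul _).const_mul _
  have e3 : (J.card : ℂ) * W + ∑ j, x j * T j J = ω J p - res n ω J p := by
    have hder : ∀ t ∈ uIcc (0:ℝ) 1, HasDerivAt (fun t : ℝ => (t : ℂ) ^ J.card * ω J (γ t))
        ((J.card : ℂ) * ((t : ℂ) ^ (J.card - 1) * ω J (γ t)) +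
          ∑ j, x j * ((t : ℂ) ^ J.card * pd n j (ω J) (γ t))) t := by
      intro t ht
      have h1 : HasFDerivAt (ω J) (fderiv ℂ (ω J) (γ t)) (γ t) :=
        ((hω J).differentiableAt (hV.mem_nhds (hγm t ht))).hasFDerivAt
      have h2 : HasDerivAt γ (p.1 - p.2, 0) t := by
        refine HasDerivAt.prodMk ?_ (hasDerivAt_const _ _)
        simpa using ((hasDerivAt_id t).smul_const (p.1 - p.2)).const_add p.2
      have h3 := (h1.restrictScalars ℝ).comp_hasDerivAt t h2
      have h4 : HasDerivAt (fun t : ℝ => (t : ℂ) ^ J.card) ((J.card : ℂ) * (t : ℂ) ^ (J.card - 1)) t := by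
        simpa using (hasDerivAt_pow J.card (t : ℂ)).comp_ofReal
      have h5 := h4.mul h3
      refine h5.congr_deriv ?_
      have h6 : (fderiv ℂ (ω J) (γ t)) ((p.1 - p.2, 0) : Pt n) =
          ∑ j, x j * pd n j (ω J) (γ t) := by
        have : ((p.1 - p.2, 0) : Pt n) = ∑ j, x j • ((Pi.single j 1, 0) : Pt n) := by
          ext i
          · simp [Prod.fst_sum, Finset.sum_apply, Pi.single_apply, hx]
          · simp [Prod.snd_sum]
        rw [this, map_sum]
        simp only [map_smul, smul_eq_mul, pd]
      rw [ContinuousLinearMap.coe_restrictScalars', h6, Finset.mul_sum, mul_assoc]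
      congr 1
      exact Finset.sum_congr rfl fun j _ => by ring
    have hint : IntervalIntegrable (fun t : ℝ => (J.card : ℂ) * ((t : ℂ) ^ (J.card - 1) * ω J (γ t)) +
          ∑ j, x j * ((t : ℂ) ^ J.card * pd n j (ω J) (γ t))) MeasureTheory.volume 0 1 :=
      ((hIω _ _).const_mul _).add (ii_sum _ _ fun j _ => (hIG _ _ _).const_mul _)
    have h := intervalIntegral.integral_eq_sub_of_hasDerivAt hder hint
    rw [intervalIntegral.integral_add ((hIω _ _).const_mul _)
      (ii_sum _ _ fun j _ => (hIG _ _ _).const_mul _),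
      intervalIntegral.integral_finsetSum (fun j _ => (hIG _ _ _).const_mul _)] at h
    simp only [intervalIntegral.integral_const_mul] at h
    refine Eq.trans h ?_
    have g1 : γ 1 = p := by simp [hγ]
    have g0 : γ 0 = (p.2, p.2) := by simp [hγ]
    rw [g1, g0]
    unfold res
    by_cases hJ : J = ∅
    · subst hJ; simp
    · simp [hJ]
  rw [e1, e2, ← e3, Finset.sum_add_distrib, Finset.sum_const, nsmul_eq_mul,
    ← Finset.sum_add_sum_compl J]
  ring

theorem P_zero (hUopen : IsOpen U) (hUconv : Convex ℝ U) (ω : Coeff n)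
    (hω : ∀ I, ∀ y ∈ U ×ˢ U, ω I y = 0) (J : Finset (Fin n)) {p : Pt n}
    (hp : p ∈ U ×ˢ U) : P n ω J p = 0 := by
  unfold P
  refine Finset.sum_eq_zero fun j _ => ?_
  have : ∫ t in (0:ℝ)..1, (t : ℂ) ^ (J.card - 1) *
      pd n j (ω (J.erase j)) (p.2 + t • (p.1 - p.2), p.2) = ∫ t in (0:ℝ)..1, (0:ℂ) := by
    refine intervalIntegral.integral_congr fun t ht => ?_
    have h1 : ω (J.erase j) =ᶠ[nhds ((p.2 + t • (p.1 - p.2), p.2) : Pt n)] fun _ => (0:ℂ) := by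
      filter_upwards [(hUopen.prod hUopen).mem_nhds (path_mem hUconv hp ht)] with y hy
      exact hω _ y hy
    simp [pd, h1.fderiv_eq]
  rw [this]; simp

theorem bord_merge_diff {m : ℕ} (f : Fin (m + 3) → ((Fin n → ℂ) → ℂ))
    (hf : ∀ k, DifferentiableOn ℂ (f k) U) (i : Fin (m + 2)) (k : Fin (m + 2)) :
    DifferentiableOn ℂ (merge (bord f) i k) U := by
  have hb : ∀ k, DifferentiableOn ℂ (bord f k) U := by
    intro k
    unfold bord
    split_ifs
    · exact differentiableOn_const (1:ℂ)
    · exact differentiableOn_const (1:ℂ)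
    · exact hf k
  unfold merge
  split_ifs
  · exact hb _
  · exact (hb _).mul (hb _)
  · exact hb _

theorem Phi_diff (hUopen : IsOpen U) (hUconv : Convex ℝ U) (q : ℕ) :
    ∀ (f : Fin (q + 2) → ((Fin n → ℂ) → ℂ)), (∀ k, DifferentiableOn ℂ (f k) U) →
    ∀ J, DifferentiableOn ℂ (Phi n q f J) (U ×ˢ U) := by
  have hfst : ∀ g : (Fin n → ℂ) → ℂ, DifferentiableOn ℂ g U →
      DifferentiableOn ℂ (fun p : Pt n => g p.1) (U ×ˢ U) := fun g hg =>
    hg.comp differentiable_fst.differentiableOn fun _ hp => hp.1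
  have hsnd : ∀ g : (Fin n → ℂ) → ℂ, DifferentiableOn ℂ g U →
      DifferentiableOn ℂ (fun p : Pt n => g p.2) (U ×ˢ U) := fun g hg =>
    hg.comp differentiable_snd.differentiableOn fun _ hp => hp.2
  induction q with
  | zero =>
    intro f hf J
    unfold Phi ofFun
    by_cases hJ : J = ∅
    · simp only [hJ, if_true]
      exact (hfst _ (hf 0)).mul (hsnd _ (hf 1))
    · simp only [hJ, if_false]
      exact differentiableOn_const _
  | succ q ih =>
    intro f hf J
    unfold Phi
    refine ((hfst _ (hf _)).mul (hsnd _ (hf _))).mul (P_diff hUopen hUconv _ (fun I => ?_) J)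
    exact DifferentiableOn.fun_sum fun i _ =>
      (ih _ (fun k => bord_merge_diff f hf i k) I).const_mul _

theorem chain_step (hUopen : IsOpen U) (hUconv : Convex ℝ U) (q : ℕ)
    (f : Fin (q + 3) → ((Fin n → ℂ) → ℂ)) (hf : ∀ k, DifferentiableOn ℂ (f k) U)
    (J : Finset (Fin n)) (p : Pt n) (hp : p ∈ U ×ˢ U)
    (hres : ∑ i : Fin (q + 2), (-1 : ℂ) ^ (i : ℕ) *
      Phi n q (merge (bord f) i) ∅ (p.2, p.2) = 0)
    (hd : ∀ I, ∀ y ∈ U ×ˢ U, dK n (fun J' p' => ∑ i : Fin (q + 2), (-1 : ℂ) ^ (i : ℕ) *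
      Phi n q (merge (bord f) i) J' p') I y = 0) :
    dK n (Phi n (q + 1) f) J p =
      ∑ i : Fin (q + 2), (-1 : ℂ) ^ (i : ℕ) * Phi n q (merge f i) J p := by
  set ω : Coeff n := fun J' p' => ∑ i : Fin (q + 2), (-1 : ℂ) ^ (i : ℕ) *
      Phi n q (merge (bord f) i) J' p' with hω
  have hdiff : ∀ I, DifferentiableOn ℂ (ω I) (U ×ˢ U) := fun I =>
    DifferentiableOn.fun_sum fun i _ =>
      (Phi_diff hUopen hUconv q _ (fun k => bord_merge_diff f hf i k) I).const_mul _
  have h1 := homotopy hUopen hUconv ω hdiff J hp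
  rw [P_zero hUopen hUconv _ hd J hp, add_zero] at h1
  have h2 : res n ω J p = 0 := by
    unfold res
    split_ifs
    · exact hres
    · rfl
  rw [h2, sub_zero] at h1
  have h3 : dK n (Phi n (q + 1) f) J p =
      f 0 p.1 * f (Fin.last (q + 2)) p.2 * dK n (P n ω) J p := by
    unfold dK
    rw [Finset.mul_sum]
    refine Finset.sum_congr rfl fun j _ => ?_
    simp only [Phi]
    ring
  rw [h3, h1, hω, Finset.mul_sum]
  refine Finset.sum_congr rfl fun i _ => ?_
  rw [Phi_bilin n q f i]
  ring

theorem dK_sum {ι : Type*} (s : Finset ι) (a : ι → ℂ) (Ω : ι → Coeff n) (I : Finset (Fin n))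
    (y : Pt n) : dK n (fun J p => ∑ i ∈ s, a i * Ω i J p) I y = ∑ i ∈ s, a i * dK n (Ω i) I y := by
  unfold dK
  simp only [Finset.mul_sum]
  rw [Finset.sum_comm]
  refine Finset.sum_congr rfl fun i _ => Finset.sum_congr rfl fun j _ => ?_
  ring

theorem chain (hUopen : IsOpen U) (hUconv : Convex ℝ U) (q : ℕ) :
    ∀ (f : Fin (q + 3) → ((Fin n → ℂ) → ℂ)), (∀ k, DifferentiableOn ℂ (f k) U) →
    ∀ J : Finset (Fin n), ∀ p ∈ U ×ˢ U,
      dK n (Phi n (q + 1) f) J p =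
        ∑ i : Fin (q + 2), (-1 : ℂ) ^ (i : ℕ) * Phi n q (merge f i) J p := by
  induction q with
  | zero =>
    intro f hf J p hp
    refine chain_step hUopen hUconv 0 f hf J p hp ?_ ?_
    · simp [Fin.sum_univ_two, Phi, ofFun, merge, bord, Fin.ext_iff]
    · intro I y _
      rw [dK_sum]
      refine Finset.sum_eq_zero fun i _ => ?_
      simp [dK, Phi, ofFun]
  | succ q ih =>
    intro f hf J p hp
    refine chain_step hUopen hUconv (q + 1) f hf J p hp ?_ ?_
    · refine Finset.sum_eq_zero fun i _ => ?_
      simp [Phi, P]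
    · intro I y hy
      rw [dK_sum]
      have : ∀ i : Fin (q + 1 + 2), dK n (Phi n (q + 1) (merge (bord f) i)) I y = _ := fun i =>
        ih (merge (bord f) i) (fun k => bord_merge_diff f hf i k) I y hy
      simp only [this]
      exact merge_sum (bord f) (fun g => Phi n q g I y)

end Homotopy

/-- The maps `Φ^{-q}` form a chain map from the bar complex of
`A = O(U)` to the Koszul complex: for every `q ≥ 1` (written `q + 1` below) and
all `f₀, …, f_{q+1} ∈ A`,
`d_K(Φ^{-q}(f₀ ⊗ … ⊗ f_{q+1})) = Φ^{-(q-1)}(∂(f₀ ⊗ … ⊗ f_{q+1}))`, where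
`∂(f₀ ⊗ … ⊗ f_{q+1}) = Σ_{i=0}^q (-1)^i f₀ ⊗ … ⊗ f_i f_{i+1} ⊗ … ⊗ f_{q+1}`. -/
theorem statement7 (n : ℕ) (hn : 1 ≤ n)
    (U : Set (Fin n → ℂ)) (hUopen : IsOpen U) (hUconv : Convex ℝ U)
    (hUne : U.Nonempty)
    (q : ℕ) (f : Fin (q + 3) → ((Fin n → ℂ) → ℂ))
    (hf : ∀ k, DifferentiableOn ℂ (f k) U) :
    ∀ J : Finset (Fin n), ∀ p ∈ U ×ˢ U,
      dK n (Phi n (q + 1) f) J p =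
        ∑ i : Fin (q + 2), (-1 : ℂ) ^ (i : ℕ) * Phi n q (merge f i) J p := by
  exact chain hUopen hUconv q f hf

end TwistedKoszul
end

section
/- For every 0 ≤ q ≤ n and ω ∈ Ǩ^q, d_Ǩ(P̌ ω) + P̌(d_Ǩ ω) = ω − reš(ω), and moreover P̌ ∘ P̌ = 0. -/
/-!
Setting: `n ≥ 1`, `U ⊆ ℂⁿ` a nonempty convex open set.  Points of `U × U` are
written `p = (z, ζ)` with `z = p.1`, `ζ = p.2`.  For `0 ≤ q ≤ n`,
`Ǩ^q = Λ^q((ℂⁿ)*) ⊗ O(U×U)` is encoded by the coefficients of its elements on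
the basis `ě^I`, where the strictly increasing multi-indices
`I = (i₁ < … < i_q)` are encoded as finsets `I ⊆ Fin n` of cardinality `q`.
-/

open scoped BigOperators

namespace TwistedKoszulDual

variable (n : ℕ)

/-- Points of `ℂⁿ × ℂⁿ`. -/
abbrev Pt (n : ℕ) := (Fin n → ℂ) × (Fin n → ℂ)

/-- A family of coefficients, indexed by the basis vectors `ě^I` of
`Λ^•((ℂⁿ)*)` (strictly increasing multi-indices `I`, encoded as finsets).
An element of `Ǩ^q` is such a family supported on finsets of cardinality `q`,
with holomorphic coefficients (see `MemK`). -/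
abbrev Coeff (n : ℕ) := Finset (Fin n) → Pt n → ℂ

/-- The sign `(-1)^{#{i ∈ I | i < j}}`, so that `ě^j ∧ ě^I = sgn j I • ě^{I ∪ {j}}`
for `j ∉ I`, and `ι_{e_j} ě^I = sgn j (I \ {j}) • ě^{I \ {j}}` for `j ∈ I`. -/
noncomputable def sgn (j : Fin n) (I : Finset (Fin n)) : ℂ :=
  (-1 : ℂ) ^ (I.filter (fun i => i < j)).card

/-- The holomorphic partial derivative `∂f/∂z^j` in the `j`-th coordinate of
the first factor. -/
noncomputable def pd (j : Fin n) (f : Pt n → ℂ) (p : Pt n) : ℂ :=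
  fderiv ℂ f p (Pi.single j 1, 0)

/-- The dual Koszul differential `d_Ǩ : Ǩ^q → Ǩ^{q+1}`: exterior multiplication
by `Σ_i (z^i - ζ^i) ě^i`. -/
noncomputable def dKd (ω : Coeff n) : Coeff n := fun J p =>
  ∑ j ∈ J, sgn n j (J.erase j) * ((p.1 j - p.2 j) * ω (J.erase j) p)

/-- The homotopy operator `P̌ : Ǩ^q → Ǩ^{q-1}`:
`P̌(f ě^I) = Σ_j (∫₀¹ t^{n-|I|} (∂f/∂z^j)(ζ + t(z - ζ), ζ) dt) ι_{e_j} ě^I`. -/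
noncomputable def Pd (ω : Coeff n) : Coeff n := fun J p =>
  ∑ j ∈ Jᶜ, sgn n j J *
    ∫ t in (0:ℝ)..1, (t : ℂ) ^ (n - (J.card + 1)) *
      pd n j (ω (insert j J)) (p.2 + t • (p.1 - p.2), p.2)

/-- The operator `reš`: zero on `Ǩ^q` for `q ≠ n`, and
`reš(f ě^1 ∧ … ∧ ě^n)(z, ζ) = f(ζ, ζ) ě^1 ∧ … ∧ ě^n` on `Ǩ^n`. -/
noncomputable def resd (ω : Coeff n) : Coeff n := fun J p =>
  if J = Finset.univ then ω Finset.univ (p.2, p.2) else 0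

/-- `ω` is an element of `Ǩ^q` over `U × U`: it is supported on multi-indices
of length `q` and its coefficients are holomorphic on `U × U`. -/
def MemK (U : Set (Fin n → ℂ)) (q : ℕ) (ω : Coeff n) : Prop :=
  (∀ I : Finset (Fin n), I.card ≠ q → ω I = 0) ∧
  ∀ I : Finset (Fin n), DifferentiableOn ℂ (ω I) (U ×ˢ U)

end TwistedKoszulDual

namespace TwistedKoszulDual


section Hol
open Set Filter Topology MeasureTheory

lemma hol_aux {n : ℕ} {S : Set (Pt n)} (hS : IsOpen S) {f : Pt n → ℂ}
    (hf : DifferentiableOn ℂ f S) (p₀ : Pt n) (hp : p₀ ∈ S) :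
    ∃ R > 0, ∃ C : ℝ, Metric.ball p₀ R ⊆ S ∧ ∀ p ∈ Metric.ball p₀ R, ‖fderiv ℂ f p‖ ≤ C := by
  have hc : ContinuousAt f p₀ := (hf.differentiableAt (hS.mem_nhds hp)).continuousAt
  have h1 : ∀ᶠ p in 𝓝 p₀, p ∈ S ∧ ‖f p‖ < ‖f p₀‖ + 1 :=
    Filter.Eventually.and (hS.mem_nhds hp) (hc.norm.eventually_lt continuousAt_const (by linarith))
  obtain ⟨R, hR, hB⟩ := Metric.eventually_nhds_iff_ball.1 h1
  refine ⟨R / 2, by positivity, (‖f p₀‖ + 1) / (R / 4), fun p hp => (hB p ?_).1, fun p hp => ?_⟩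
  · exact Metric.ball_subset_ball (by linarith) hp
  · refine ContinuousLinearMap.opNorm_le_of_unit_norm (by positivity) fun v hv => ?_
    have hin : ∀ w : ℂ, ‖w‖ ≤ R / 4 → p + w • v ∈ Metric.ball p₀ R := by
      intro w hw
      rw [Metric.mem_ball, dist_eq_norm] at hp ⊢
      have : p + w • v - p₀ = (p - p₀) + w • v := by abel
      rw [this]
      refine (norm_add_le _ _).trans_lt ?_
      rw [norm_smul, hv]
      linarith
    have hd : ∀ w : ℂ, ‖w‖ ≤ R / 4 →
        HasDerivAt (fun w : ℂ => f (p + w • v)) (fderiv ℂ f (p + w • v) v) w := by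
      intro w hw
      have hd1 := (hf.differentiableAt (hS.mem_nhds (hB _ (hin w hw)).1)).hasFDerivAt
      have hd2 : HasDerivAt (fun w : ℂ => p + w • v) v w := by
        simpa using ((hasDerivAt_id w).smul_const v).const_add p
      exact hd1.comp_hasDerivAt w hd2
    have h0 := (hd 0 (by simp; positivity)).deriv
    rw [zero_smul, add_zero] at h0
    rw [← h0]
    refine Complex.norm_deriv_le_of_forall_mem_sphere_norm_le (by positivity) ?_ ?_
    · refine DifferentiableOn.diffContOnCl (s := Metric.ball (0:ℂ) (R / 4)) fun w hw => ?_
      have := Metric.closure_ball_subset_closedBall hw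
      exact (hd w (by simpa using this)).differentiableAt.differentiableWithinAt
    · intro w hw
      exact (hB _ (hin w (by simpa using (le_of_eq hw)))).2.le

lemma hol_fderiv {n : ℕ} {S : Set (Pt n)} (hS : IsOpen S) {f : Pt n → ℂ}
    (hf : DifferentiableOn ℂ f S) (v : Pt n) :
    DifferentiableOn ℂ (fun p => fderiv ℂ f p v) S := by
  intro p₀ hp
  refine DifferentiableAt.differentiableWithinAt ?_
  obtain ⟨R, hR, C, hB, hC⟩ := hol_aux hS hf p₀ hp
  obtain ⟨r, hr, hrv⟩ : ∃ r : ℝ, 0 < r ∧ r * ‖v‖ < R / 4 := by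
    refine ⟨R / 4 / (‖v‖ + 1), by positivity, ?_⟩
    rw [div_mul_eq_mul_div, div_lt_iff₀ (by positivity)]
    nlinarith [norm_nonneg v]
  have hin : ∀ p ∈ Metric.ball p₀ (R / 4), ∀ w : ℂ, ‖w‖ < 2 * r →
      p + w • v ∈ Metric.ball p₀ R := by
    intro p hp w hw
    rw [Metric.mem_ball, dist_eq_norm] at hp ⊢
    have : p + w • v - p₀ = (p - p₀) + w • v := by abel
    rw [this]
    refine (norm_add_le _ _).trans_lt ?_
    rw [norm_smul]
    nlinarith [norm_nonneg v]
  have hda : ∀ p ∈ Metric.ball p₀ (R / 4), ∀ w : ℂ, ‖w‖ < 2 * r →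
      DifferentiableAt ℂ f (p + w • v) := fun p hp w hw =>
    hf.differentiableAt (hS.mem_nhds (hB (hin p hp w hw)))
  have hd : ∀ p ∈ Metric.ball p₀ (R / 4), ∀ w : ℂ, ‖w‖ < 2 * r →
        HasDerivAt (fun w : ℂ => f (p + w • v)) (fderiv ℂ f (p + w • v) v) w := by
    intro p hp w hw
    have hd2 : HasDerivAt (fun w : ℂ => p + w • v) v w := by
      simpa using ((hasDerivAt_id w).smul_const v).const_add p
    exact (hda p hp w hw).hasFDerivAt.comp_hasDerivAt w hd2
  have hcm : ∀ θ : ℝ, ‖circleMap 0 r θ‖ < 2 * r := by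
    intro θ
    rw [norm_circleMap_zero, abs_of_pos hr]; linarith
  set c : ℝ → ℂ := fun θ => deriv (circleMap 0 r) θ * ((circleMap 0 r θ - 0) ^ 2)⁻¹ with hcdef
  have hcc : Continuous c := by
    simp only [hcdef, deriv_circleMap, sub_zero]
    have hcont := continuous_circleMap 0 r
    refine (hcont.mul continuous_const).mul ((hcont.pow 2).inv₀ fun θ => ?_)
    exact pow_ne_zero _ (circleMap_ne_center hr.ne')
  have key : ∀ p ∈ Metric.ball p₀ (R / 4), fderiv ℂ f p v =
      (2 * Real.pi * Complex.I)⁻¹ •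
        ∫ θ in (0:ℝ)..2 * Real.pi, c θ • f (p + circleMap 0 r θ • v) := by
    intro p hp
    have h0 := (hd p hp 0 (by simp; positivity)).deriv
    rw [zero_smul, add_zero] at h0
    rw [← h0, ← Complex.two_pi_I_inv_smul_circleIntegral_sub_sq_inv_smul_of_differentiable
      (U := Metric.ball (0:ℂ) (2 * r)) Metric.isOpen_ball (c := 0) (R := r)
      (Metric.closedBall_subset_ball (by linarith))
      (fun w hw => (hd p hp w (by simpa using hw)).differentiableAt.differentiableWithinAt)
      (by simpa using hr)]
    simp only [circleIntegral, smul_smul, hcdef]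
  have hcontf : ∀ p ∈ Metric.ball p₀ (R / 4),
      Continuous fun θ : ℝ => c θ • f (p + circleMap 0 r θ • v) := by
    intro p hp
    refine hcc.smul (continuous_iff_continuousAt.2 fun θ => ?_)
    refine ContinuousAt.comp (f := fun θ : ℝ => p + circleMap 0 r θ • v)
      (hda p hp _ (hcm θ)).continuousAt ?_
    have hcont := continuous_circleMap 0 r
    fun_prop
  have hnh : Metric.ball p₀ (R / 4) ∈ 𝓝 p₀ := Metric.ball_mem_nhds _ (by positivity)
  have main := intervalIntegral.hasFDerivAt_integral_of_dominated_of_fderiv_le (𝕜 := ℂ)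
    (μ := volume) (a := 0) (b := 2 * Real.pi)
    (F := fun p θ => c θ • f (p + circleMap 0 r θ • v))
    (F' := fun p θ => c θ • fderiv ℂ f (p + circleMap 0 r θ • v))
    (bound := fun θ => ‖c θ‖ * C) hnh
    (Filter.eventually_of_mem hnh fun p hp => (hcontf p hp).aestronglyMeasurable)
    ((hcontf p₀ (mem_of_mem_nhds hnh)).intervalIntegrable _ _)
    (by
      refine hcc.aestronglyMeasurable.smul ?_
      refine Measurable.aestronglyMeasurable ?_
      refine (measurable_fderiv ℂ f).comp ?_
      have hcont := continuous_circleMap 0 r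
      exact Continuous.measurable (by fun_prop))
    (Filter.Eventually.of_forall fun θ _ p hp => by
      rw [norm_smul]
      exact mul_le_mul_of_nonneg_left (hC _ (hin p hp _ (hcm θ))) (norm_nonneg _))
    (Continuous.intervalIntegrable (by fun_prop) _ _)
    (Filter.Eventually.of_forall fun θ _ p hp => by
      have h1 := (hda p hp _ (hcm θ)).hasFDerivAt
      have h2 : HasFDerivAt (fun p : Pt n => p + circleMap 0 r θ • v)
        (ContinuousLinearMap.id ℂ (Pt n)) p := (hasFDerivAt_id p).add_const _
      have h3 := h1.comp p h2
      rw [ContinuousLinearMap.comp_id] at h3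
      exact h3.const_smul (c θ))
  refine ((main.differentiableAt).const_smul ((2 * Real.pi * Complex.I)⁻¹ : ℂ)).congr_of_eventuallyEq
    (Filter.eventually_of_mem hnh key)

lemma hol_contDiffOn {n : ℕ} {S : Set (Pt n)} (hS : IsOpen S) (k : ℕ) : ∀ {f : Pt n → ℂ},
    DifferentiableOn ℂ f S → ContDiffOn ℂ k f S := by
  induction k with
  | zero => intro f hf; exact contDiffOn_zero.2 hf.continuousOn
  | succ k ih =>
    intro f hf
    push_cast
    rw [contDiffOn_succ_iff_fderiv_of_isOpen hS]
    refine ⟨hf, fun h => by simp at h, ?_⟩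
    rw [contDiffOn_clm_apply]
    exact fun v => ih (hol_fderiv hS hf v)

lemma hol_symm {n : ℕ} {S : Set (Pt n)} (hS : IsOpen S) {f : Pt n → ℂ}
    (hf : DifferentiableOn ℂ f S) {p : Pt n} (hp : p ∈ S) (v w : Pt n) :
    fderiv ℂ (fun x => fderiv ℂ f x v) p w = fderiv ℂ (fun x => fderiv ℂ f x w) p v := by
  have h2 : ContDiffAt ℂ 2 f p := (hol_contDiffOn hS 2 hf).contDiffAt (hS.mem_nhds hp)
  have hs := h2.isSymmSndFDerivAt (by simp)
  have hd : DifferentiableAt ℂ (fderiv ℂ f) p :=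
    (h2.fderiv_right (m := 1) (by norm_num)).differentiableAt (by simp)
  have e : ∀ u y, fderiv ℂ (fun x => fderiv ℂ f x u) p y = fderiv ℂ (fderiv ℂ f) p y u := by
    intro u y
    rw [fderiv_clm_apply hd (differentiableAt_const u)]
    simp
  rw [e, e]
  exact hs.eq w v

end Hol

section TOp
open Set Filter Topology MeasureTheory

/-- `σ_t (z, ζ) = (ζ + t (z - ζ), ζ)` -/
noncomputable def sig (n : ℕ) (t : ℝ) (p : Pt n) : Pt n := (p.2 + t • (p.1 - p.2), p.2)

noncomputable def sigL (n : ℕ) (t : ℝ) : Pt n →L[ℂ] Pt n :=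
  (ContinuousLinearMap.snd ℂ (Fin n → ℂ) (Fin n → ℂ)).prod
      (ContinuousLinearMap.snd ℂ (Fin n → ℂ) (Fin n → ℂ)) +
    (t : ℂ) • (ContinuousLinearMap.fst ℂ (Fin n → ℂ) (Fin n → ℂ) -
      ContinuousLinearMap.snd ℂ (Fin n → ℂ) (Fin n → ℂ)).prod 0

lemma sigL_apply (n : ℕ) (t : ℝ) (p : Pt n) : sigL n t p = sig n t p := by
  ext i <;> simp [sigL, sig]

lemma sigL_cont (n : ℕ) : Continuous (sigL n) := by
  unfold sigL
  have : Continuous fun t : ℝ => (t : ℂ) := Complex.continuous_ofReal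
  fun_prop

lemma sig_cont (n : ℕ) : Continuous fun x : ℝ × Pt n => sig n x.1 x.2 := by
  unfold sig
  fun_prop

noncomputable def T (n : ℕ) (m : ℕ) (g : Pt n → ℂ) (p : Pt n) : ℂ :=
  ∫ t in (0:ℝ)..1, (t : ℂ) ^ m * g (sig n t p)

def Good {n : ℕ} (S : Set (Pt n)) : Prop :=
  IsOpen S ∧ ∀ p ∈ S, ∀ t ∈ Icc (0:ℝ) 1, sig n t p ∈ S

variable {n : ℕ} {S : Set (Pt n)}

lemma T_cont (hS : Good S) {g : Pt n → ℂ} (hg : ContinuousOn g S) (m : ℕ) {p : Pt n} (hp : p ∈ S) :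
    ContinuousOn (fun t : ℝ => (t : ℂ) ^ m * g (sig n t p)) (Icc 0 1) := by
  refine ContinuousOn.mul (by fun_prop) ?_
  refine hg.comp (Continuous.continuousOn ?_) fun t ht => hS.2 p hp t ht
  unfold sig; fun_prop

lemma T_int (hS : Good S) {g : Pt n → ℂ} (hg : ContinuousOn g S) (m : ℕ) {p : Pt n} (hp : p ∈ S) :
    IntervalIntegrable (fun t : ℝ => (t : ℂ) ^ m * g (sig n t p)) volume 0 1 := by
  refine ContinuousOn.intervalIntegrable ?_
  rw [uIcc_of_le zero_le_one]
  exact T_cont hS hg m hp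

lemma T_congr (hS : Good S) {g h : Pt n → ℂ} (hgh : ∀ p ∈ S, g p = h p) (m : ℕ) {p : Pt n}
    (hp : p ∈ S) : T n m g p = T n m h p := by
  refine intervalIntegral.integral_congr fun t ht => ?_
  rw [uIcc_of_le zero_le_one] at ht
  simp only [hgh _ (hS.2 p hp t ht)]

lemma T_sum (hS : Good S) {ι : Type*} (s : Finset ι) (c : ι → ℂ) (g : ι → Pt n → ℂ)
    (hg : ∀ i ∈ s, ContinuousOn (g i) S) (m : ℕ) {p : Pt n} (hp : p ∈ S) :
    T n m (fun x => ∑ i ∈ s, c i * g i x) p = ∑ i ∈ s, c i * T n m (g i) p := by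
  unfold T
  simp only [← intervalIntegral.integral_const_mul]
  rw [← intervalIntegral.integral_finsetSum]
  · refine intervalIntegral.integral_congr fun t _ => ?_
    simp only [Finset.mul_sum]
    exact Finset.sum_congr rfl fun i _ => by ring
  · exact fun i hi => (T_int hS (hg i hi) m hp).const_mul _

lemma T_add (hS : Good S) {g h : Pt n → ℂ} (hg : ContinuousOn g S) (hh : ContinuousOn h S)
    (m : ℕ) {p : Pt n} (hp : p ∈ S) :
    T n m (fun x => g x + h x) p = T n m g p + T n m h p := by
  unfold T
  rw [← intervalIntegral.integral_add (T_int hS hg m hp) (T_int hS hh m hp)]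
  simp only [mul_add]

lemma T_x (j : Fin n) (g : Pt n → ℂ) (m : ℕ) (p : Pt n) :
    T n m (fun x => (x.1 j - x.2 j) * g x) p = (p.1 j - p.2 j) * T n (m + 1) g p := by
  unfold T
  rw [← intervalIntegral.integral_const_mul]
  refine intervalIntegral.integral_congr fun t _ => ?_
  simp [sig, pow_succ]
  ring

lemma T_hasFDerivAt (hS : Good S) {g : Pt n → ℂ} (hg : DifferentiableOn ℂ g S) (m : ℕ)
    {p₀ : Pt n} (hp : p₀ ∈ S) :
    HasFDerivAt (T n m g)
      (∫ t in (0:ℝ)..1, (t : ℂ) ^ m • (fderiv ℂ g (sig n t p₀)).comp (sigL n t)) p₀ ∧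
    IntervalIntegrable (fun t : ℝ => (t : ℂ) ^ m • (fderiv ℂ g (sig n t p₀)).comp (sigL n t))
      volume 0 1 := by
  have hfc : ContinuousOn (fderiv ℂ g) S :=
    (hol_contDiffOn hS.1 1 hg).continuousOn_fderiv_of_isOpen hS.1 (by simp)
  have hjc : ContinuousOn (fun x : ℝ × Pt n =>
      ((x.1 : ℂ) ^ m) • (fderiv ℂ g (sig n x.1 x.2)).comp (sigL n x.1)) (Icc 0 1 ×ˢ S) := by
    have hpw : Continuous fun x : ℝ × Pt n => (x.1 : ℂ) ^ m := by fun_prop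
    refine hpw.continuousOn.smul (ContinuousOn.clm_comp ?_ ?_)
    · exact hfc.comp (sig_cont n).continuousOn fun x hx => hS.2 _ hx.2 _ hx.1
    · exact ((sigL_cont n).comp continuous_fst).continuousOn
  obtain ⟨r, hr, hB⟩ := Metric.nhds_basis_closedBall.mem_iff.1 (hS.1.mem_nhds hp)
  obtain ⟨C, hC⟩ := ((isCompact_Icc (a := (0:ℝ)) (b := 1)).prod
    (isCompact_closedBall p₀ r)).exists_bound_of_continuousOn
      (hjc.mono (prod_mono le_rfl hB))
  have hnh : Metric.closedBall p₀ r ∈ 𝓝 p₀ := Metric.closedBall_mem_nhds _ hr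
  have hI : IntervalIntegrable
      (fun t : ℝ => (t : ℂ) ^ m • (fderiv ℂ g (sig n t p₀)).comp (sigL n t)) volume 0 1 := by
    refine ContinuousOn.intervalIntegrable ?_
    rw [uIcc_of_le zero_le_one]
    exact hjc.comp (f := fun t : ℝ => (t, p₀)) (by fun_prop) fun t ht => ⟨ht, hp⟩
  have hsub : ∀ {t : ℝ}, t ∈ uIoc (0:ℝ) 1 → t ∈ Icc (0:ℝ) 1 := by
    intro t ht
    rw [uIoc_of_le zero_le_one] at ht
    exact ⟨ht.1.le, ht.2⟩
  refine ⟨?_, hI⟩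
  refine intervalIntegral.hasFDerivAt_integral_of_dominated_of_fderiv_le (𝕜 := ℂ)
    (μ := volume) (a := 0) (b := 1)
    (F := fun p t => (t : ℂ) ^ m * g (sig n t p))
    (F' := fun p t => (t : ℂ) ^ m • (fderiv ℂ g (sig n t p)).comp (sigL n t))
    (bound := fun _ => C) hnh ?_ (T_int hS hg.continuousOn m hp) ?_ ?_
    (by simp) ?_
  · refine Filter.eventually_of_mem hnh fun p hp => ?_
    have := T_int hS hg.continuousOn m (hB hp)
    exact (intervalIntegrable_iff.1 this).aestronglyMeasurable
  · exact (intervalIntegrable_iff.1 hI).aestronglyMeasurable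
  · exact Filter.Eventually.of_forall fun t ht p hp => hC (t, p) ⟨hsub ht, hp⟩
  · refine Filter.Eventually.of_forall fun t ht p hp => ?_
    have h1 := (hg.differentiableAt (hS.1.mem_nhds (hS.2 p (hB hp) t (hsub ht)))).hasFDerivAt
    have h2 : HasFDerivAt (fun p => sig n t p) (sigL n t) p := by
      have := (sigL n t).hasFDerivAt (x := p)
      exact this.congr_of_eventuallyEq
        (Filter.Eventually.of_forall fun x => (sigL_apply n t x).symm)
    exact (h1.comp p h2).const_smul ((t : ℂ) ^ m)

lemma T_hol (hS : Good S) {g : Pt n → ℂ} (hg : DifferentiableOn ℂ g S) (m : ℕ) :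
    DifferentiableOn ℂ (T n m g) S := fun _ hp =>
  (T_hasFDerivAt hS hg m hp).1.differentiableAt.differentiableWithinAt

lemma pd_hol (hS : Good S) {g : Pt n → ℂ} (hg : DifferentiableOn ℂ g S) (j : Fin n) :
    DifferentiableOn ℂ (pd n j g) S := hol_fderiv hS.1 hg _

lemma pd_T (hS : Good S) {g : Pt n → ℂ} (hg : DifferentiableOn ℂ g S) (m : ℕ) (k : Fin n)
    {p : Pt n} (hp : p ∈ S) : pd n k (T n m g) p = T n (m + 1) (pd n k g) p := by
  have h := T_hasFDerivAt hS hg m hp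
  unfold pd
  rw [h.1.fderiv, ContinuousLinearMap.intervalIntegral_apply h.2]
  refine intervalIntegral.integral_congr fun t _ => ?_
  have e : sig n t ((Pi.single k 1, 0) : Pt n) = (t : ℂ) • ((Pi.single k 1, 0) : Pt n) := by
    ext i <;> simp [sig]
  simp only [FunLike.coe_smul, Pi.smul_apply, ContinuousLinearMap.comp_apply,
    sigL_apply, e, map_smul, smul_eq_mul]
  ring

lemma pd_symm (hS : Good S) {g : Pt n → ℂ} (hg : DifferentiableOn ℂ g S) (j k : Fin n)
    {p : Pt n} (hp : p ∈ S) : pd n k (pd n j g) p = pd n j (pd n k g) p :=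
  hol_symm hS.1 hg hp _ _

lemma pd_sum (hS : Good S) {ι : Type*} (s : Finset ι) (c : ι → ℂ) (g : ι → Pt n → ℂ)
    (hg : ∀ i ∈ s, DifferentiableOn ℂ (g i) S) (k : Fin n) {p : Pt n} (hp : p ∈ S) :
    pd n k (fun x => ∑ i ∈ s, c i * g i x) p = ∑ i ∈ s, c i * pd n k (g i) p := by
  unfold pd
  have hd : ∀ i ∈ s, DifferentiableAt ℂ (g i) p :=
    fun i hi => (hg i hi).differentiableAt (hS.1.mem_nhds hp)
  have := HasFDerivAt.fun_sum (u := s) fun i hi => ((hd i hi).hasFDerivAt.const_mul (c i))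
  rw [this.fderiv]
  simp

lemma pd_x (hS : Good S) {g : Pt n → ℂ} (hg : DifferentiableOn ℂ g S) (j k : Fin n)
    {p : Pt n} (hp : p ∈ S) :
    pd n k (fun x => (x.1 j - x.2 j) * g x) p =
      (if j = k then g p else 0) + (p.1 j - p.2 j) * pd n k g p := by
  unfold pd
  have hd := (hg.differentiableAt (hS.1.mem_nhds hp)).hasFDerivAt
  have hx : HasFDerivAt (fun x : Pt n => x.1 j - x.2 j)
      ((ContinuousLinearMap.proj j).comp (ContinuousLinearMap.fst ℂ (Fin n → ℂ) (Fin n → ℂ)) -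
      (ContinuousLinearMap.proj j).comp (ContinuousLinearMap.snd ℂ (Fin n → ℂ) (Fin n → ℂ))) p :=
    ((ContinuousLinearMap.proj (R := ℂ) (φ := fun _ : Fin n => ℂ) j).comp
        (ContinuousLinearMap.fst ℂ (Fin n → ℂ) (Fin n → ℂ)) -
      (ContinuousLinearMap.proj (R := ℂ) (φ := fun _ : Fin n => ℂ) j).comp
        (ContinuousLinearMap.snd ℂ (Fin n → ℂ) (Fin n → ℂ))).hasFDerivAt
  rw [(hx.fun_mul hd).fderiv]
  simp [Pi.single_apply]
  split_ifs <;> ring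

lemma T_main (hS : Good S) {g : Pt n → ℂ} (hg : DifferentiableOn ℂ g S) (m : ℕ)
    {p : Pt n} (hp : p ∈ S) :
    ∑ j, (p.1 j - p.2 j) * T n m (pd n j g) p + m * T n (m - 1) g p =
      g p - 0 ^ m * g (p.2, p.2) := by
  have hpc : ∀ j, ContinuousOn (pd n j g) S := fun j => (pd_hol hS hg j).continuousOn
  have hd : ∀ t ∈ uIcc (0:ℝ) 1, HasDerivAt (fun t : ℝ => (t : ℂ) ^ m * g (sig n t p))
      ((m * (t : ℂ) ^ (m - 1)) * g (sig n t p) +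
        (t : ℂ) ^ m * ∑ j, (p.1 j - p.2 j) * pd n j g (sig n t p)) t := by
    intro t ht
    rw [uIcc_of_le zero_le_one] at ht
    have h0 : HasDerivAt (fun t : ℝ => (t : ℂ)) 1 t := Complex.ofRealCLM.hasDerivAt
    have h1 := h0.fun_pow m
    have h2 := (hg.differentiableAt (hS.1.mem_nhds (hS.2 p hp t ht))).hasFDerivAt
    have h3 : HasDerivAt (fun t : ℝ => sig n t p) ((p.1 - p.2, 0) : Pt n) t := by
      unfold sig
      refine HasDerivAt.prodMk ?_ (hasDerivAt_const _ _)
      simpa using ((hasDerivAt_id t).smul_const (p.1 - p.2)).const_add p.2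
    have h4 := (h2.restrictScalars ℝ).comp_hasDerivAt t h3
    have h5 := h1.mul h4
    refine h5.congr_deriv ?_
    have e : ((p.1 - p.2, 0) : Pt n) =
        ∑ j, (p.1 j - p.2 j) • ((Pi.single j 1, 0) : Pt n) := by
      ext i <;> simp [Prod.fst_sum, Prod.snd_sum, Finset.sum_apply, Pi.single_apply]
    have e2 : fderiv ℂ g (sig n t p) ((p.1 - p.2, 0) : Pt n) =
        ∑ j, (p.1 j - p.2 j) * pd n j g (sig n t p) := by
      rw [e, map_sum]
      simp only [map_smul, smul_eq_mul, pd]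
    simp [e2]
  have hi1 : IntervalIntegrable (fun t : ℝ => (m * (t : ℂ) ^ (m - 1)) * g (sig n t p))
      volume 0 1 := by
    have := (T_int hS hg.continuousOn (m - 1) hp).const_mul (m : ℂ)
    simpa only [mul_assoc] using this
  have hsc : ContinuousOn (fun x => ∑ j, (p.1 j - p.2 j) * pd n j g x) S :=
    continuousOn_finsetSum _ fun j _ => continuousOn_const.mul (hpc j)
  have hi2 := T_int hS hsc m hp
  have := intervalIntegral.integral_eq_sub_of_hasDerivAt hd (hi1.add hi2)
  rw [intervalIntegral.integral_add hi1 hi2] at this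
  have e1 := T_sum hS Finset.univ (fun j => p.1 j - p.2 j) (fun j => pd n j g)
    (fun j _ => hpc j) m hp
  rw [← e1]
  have e2 : (m : ℂ) * T n (m - 1) g p =
      ∫ t in (0:ℝ)..1, (m * (t : ℂ) ^ (m - 1)) * g (sig n t p) := by
    unfold T
    rw [← intervalIntegral.integral_const_mul]
    simp only [mul_assoc]
  rw [e2, add_comm]
  unfold T
  rw [this]
  simp [sig]

end TOp

section Comb

variable {n : ℕ}

lemma sgn_sq (j : Fin n) (I : Finset (Fin n)) : sgn n j I * sgn n j I = 1 := by
  unfold sgn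
  rw [← pow_add, ← two_mul, pow_mul]
  simp

lemma sgn_insert (j k : Fin n) (I : Finset (Fin n)) (hk : k ∉ I) :
    sgn n j (insert k I) = (if k < j then -1 else 1) * sgn n j I := by
  unfold sgn
  rw [Finset.filter_insert]
  split_ifs with h
  · rw [Finset.card_insert_of_notMem (by simp [hk]), pow_succ]
    ring
  · simp

lemma sgn_anti (j k : Fin n) (I : Finset (Fin n)) (hj : j ∉ I) (hk : k ∉ I) (hjk : j ≠ k) :
    sgn n k (insert j I) * sgn n j (insert k I) = - (sgn n k I * sgn n j I) := by
  rw [sgn_insert _ _ _ hj, sgn_insert _ _ _ hk]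
  rcases lt_or_gt_of_ne hjk with h | h
  · simp [h, h.not_gt]
  · simp [h, h.not_gt]

lemma sgn_anti' (j k : Fin n) (I : Finset (Fin n)) (hj : j ∉ I) (hk : k ∉ I) (hjk : j ≠ k) :
    sgn n k I * sgn n j (insert k I) = - (sgn n j I * sgn n k (insert j I)) := by
  rw [sgn_insert _ _ _ hj, sgn_insert _ _ _ hk]
  rcases lt_or_gt_of_ne hjk with h | h
  · simp [h, h.not_gt, mul_comm]
  · simp [h, h.not_gt, mul_comm]

lemma Pd_eq (ω : Coeff n) (J : Finset (Fin n)) (p : Pt n) :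
    Pd n ω J p = ∑ j ∈ Jᶜ, sgn n j J * T n (n - (J.card + 1)) (pd n j (ω (insert j J))) p := rfl

variable {S : Set (Pt n)}

lemma PP (hS : Good S) (ω : Coeff n) (hω : ∀ I, DifferentiableOn ℂ (ω I) S)
    (J : Finset (Fin n)) {p : Pt n} (hp : p ∈ S) : Pd n (Pd n ω) J p = 0 := by
  set M := n - (J.card + 1)
  set M' := n - (J.card + 1 + 1) + 1
  set a : Fin n → Fin n → ℂ := fun k j => sgn n k J * (sgn n j (insert k J) *
    T n M (T n M' (pd n k (pd n j (ω (insert j (insert k J)))))) p) with ha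
  have hT : ∀ m j I, DifferentiableOn ℂ (T n m (pd n j (ω I))) S :=
    fun m j I => T_hol hS (pd_hol hS (hω I) j) m
  have h1 : Pd n (Pd n ω) J p = ∑ k ∈ Jᶜ, ∑ j ∈ Jᶜ, if k = j then 0 else a k j := by
    rw [Pd_eq]
    refine Finset.sum_congr rfl fun k hk => ?_
    have hkJ : k ∉ J := by simpa using hk
    have e1 : ∀ x ∈ S, pd n k (Pd n ω (insert k J)) x = ∑ j ∈ (insert k J)ᶜ,
        sgn n j (insert k J) * T n M' (pd n k (pd n j (ω (insert j (insert k J))))) x := by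
      intro x hx
      have : Pd n ω (insert k J) = fun x => ∑ j ∈ (insert k J)ᶜ, sgn n j (insert k J) *
          T n (n - ((insert k J).card + 1)) (pd n j (ω (insert j (insert k J)))) x := by
        funext x; exact Pd_eq _ _ _
      rw [this, pd_sum hS _ _ _ (fun j _ => hT _ _ _) k hx]
      refine Finset.sum_congr rfl fun j _ => ?_
      rw [pd_T hS (pd_hol hS (hω _) j) _ k hx, Finset.card_insert_of_notMem hkJ]
    rw [T_congr hS e1 _ hp, T_sum hS _ _ _
      (fun j _ => (T_hol hS (pd_hol hS (pd_hol hS (hω _) j) k) _).continuousOn) _ hp,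
      Finset.mul_sum]
    have e2 : (insert k J)ᶜ = Jᶜ.filter (fun j => ¬ k = j) := by
      ext j; simp [eq_comm, and_comm]
    rw [e2, Finset.sum_filter]
    refine Finset.sum_congr rfl fun j _ => ?_
    by_cases h : k = j <;> simp [h, ha, M]
  have h2 : ∀ k ∈ Jᶜ, ∀ j ∈ Jᶜ, (if k = j then 0 else a k j) = - (if j = k then 0 else a j k) := by
    intro k hk j hj
    by_cases h : k = j
    · simp [h]
    · have hkJ : k ∉ J := by simpa using hk
      have hjJ : j ∉ J := by simpa using hj
      rw [if_neg h, if_neg (Ne.symm h)]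
      simp only [ha, ← mul_assoc]
      rw [sgn_anti' j k J hjJ hkJ (Ne.symm h), Finset.insert_comm j k J, neg_mul]
      congr 2
      refine T_congr hS (fun x hx => ?_) _ hp
      exact T_congr hS (fun y hy => pd_symm hS (hω _) j k hy) _ hx
  have h3 : Pd n (Pd n ω) J p = - Pd n (Pd n ω) J p := by
    conv_lhs => rw [h1, Finset.sum_comm]
    rw [h1, ← Finset.sum_neg_distrib]
    refine Finset.sum_congr rfl fun k hk => ?_
    rw [← Finset.sum_neg_distrib]
    exact Finset.sum_congr rfl fun j hj => h2 j hj k hk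
  linear_combination h3 / 2

lemma homotopy (hS : Good S) (ω : Coeff n) (hω : ∀ I, DifferentiableOn ℂ (ω I) S)
    (J : Finset (Fin n)) {p : Pt n} (hp : p ∈ S) :
    dKd n (Pd n ω) J p + Pd n (dKd n ω) J p = ω J p - resd n ω J p := by
  set m := n - J.card with hm
  set X : Fin n → ℂ := fun j => p.1 j - p.2 j with hX
  have h1 : dKd n (Pd n ω) J p = ∑ j ∈ J, X j * T n m (pd n j (ω J)) p +
      ∑ j ∈ J, ∑ k ∈ Jᶜ, sgn n j (J.erase j) * (X j * (sgn n k (J.erase j) *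
        T n m (pd n k (ω (insert k (J.erase j)))) p)) := by
    unfold dKd
    rw [← Finset.sum_add_distrib]
    refine Finset.sum_congr rfl fun j hj => ?_
    rw [Pd_eq, Finset.card_erase_add_one hj, Finset.compl_erase,
      Finset.sum_insert (by simpa using hj), Finset.insert_erase hj]
    simp only [mul_add, Finset.mul_sum]
    congr 1
    linear_combination (X j * T n m (pd n j (ω J)) p) * sgn_sq j (J.erase j)
  have h2 : Pd n (dKd n ω) J p = ∑ k ∈ Jᶜ, (T n (m - 1) (ω J) p + X k * T n m (pd n k (ω J)) p) +
      ∑ k ∈ Jᶜ, ∑ j ∈ J, sgn n k J * (sgn n j ((insert k J).erase j) * (X j *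
        T n m (pd n k (ω ((insert k J).erase j))) p)) := by
    rw [Pd_eq, ← Finset.sum_add_distrib]
    refine Finset.sum_congr rfl fun k hk => ?_
    have hkJ : k ∉ J := by simpa using hk
    have hlt : J.card < n := by
      have := Finset.card_lt_univ_of_notMem hkJ
      simpa using this
    have hxh : ∀ j I, DifferentiableOn ℂ (fun x : Pt n => (x.1 j - x.2 j) * ω I x) S := by
      intro j I
      exact DifferentiableOn.mul (Differentiable.differentiableOn (by fun_prop)) (hω I)
    have e1 : ∀ x ∈ S, pd n k (dKd n ω (insert k J)) x = ∑ j ∈ insert k J,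
        sgn n j ((insert k J).erase j) *
          pd n k (fun x => (x.1 j - x.2 j) * ω ((insert k J).erase j) x) x := by
      intro x hx
      exact pd_sum hS _ _ _ (fun j _ => hxh j _) k hx
    have e2 : ∀ j I, T n (m - 1) (pd n k (fun x => (x.1 j - x.2 j) * ω I x)) p =
        (if j = k then T n (m - 1) (ω I) p else 0) + X j * T n m (pd n k (ω I)) p := by
      intro j I
      have hm1 : m - 1 + 1 = m := by omega
      have hc : ContinuousOn (fun x : Pt n => if j = k then ω I x else 0) S := by
        split_ifs
        · exact (hω I).continuousOn
        · exact continuousOn_const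
      have hc2 : ContinuousOn (fun x : Pt n => (x.1 j - x.2 j) * pd n k (ω I) x) S :=
        ContinuousOn.mul (Continuous.continuousOn (by fun_prop)) (pd_hol hS (hω I) k).continuousOn
      rw [T_congr hS (fun x hx => pd_x hS (hω I) j k hx) _ hp, T_add hS hc hc2 _ hp, T_x, hm1]
      congr 1
      split_ifs
      · rfl
      · simp [T]
    have hm2 : n - (J.card + 1) = m - 1 := by omega
    rw [hm2, T_congr hS e1 _ hp, T_sum hS _ _ _
      (fun j _ => (pd_hol hS (hxh j _) k).continuousOn) _ hp]
    simp only [e2]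
    rw [Finset.sum_insert hkJ, Finset.erase_insert hkJ, if_pos rfl, mul_add, Finset.mul_sum]
    congr 1
    · linear_combination (T n (m - 1) (ω J) p + X k * T n m (pd n k (ω J)) p) * sgn_sq k J
    · refine Finset.sum_congr rfl fun j hj => ?_
      rw [if_neg (by rintro rfl; exact hkJ hj), zero_add]
  have h3 : ∑ j ∈ J, ∑ k ∈ Jᶜ, sgn n j (J.erase j) * (X j * (sgn n k (J.erase j) *
        T n m (pd n k (ω (insert k (J.erase j)))) p)) +
      ∑ k ∈ Jᶜ, ∑ j ∈ J, sgn n k J * (sgn n j ((insert k J).erase j) * (X j *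
        T n m (pd n k (ω ((insert k J).erase j))) p)) = 0 := by
    rw [Finset.sum_comm, ← Finset.sum_add_distrib]
    refine Finset.sum_eq_zero fun k hk => ?_
    rw [← Finset.sum_add_distrib]
    refine Finset.sum_eq_zero fun j hj => ?_
    have hkJ : k ∉ J := by simpa using hk
    have hjk : j ≠ k := by rintro rfl; exact hkJ hj
    have hs := sgn_anti j k (J.erase j) (by simp) (by simp [hkJ]) hjk
    rw [Finset.insert_erase hj] at hs
    rw [Finset.erase_insert_of_ne hjk.symm]
    linear_combination (X j * T n m (pd n k (ω (insert k (J.erase j)))) p) * hs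
  have h4 := T_main hS (hω J) m hp
  have h5 : ∑ k ∈ Jᶜ, (T n (m - 1) (ω J) p + X k * T n m (pd n k (ω J)) p) =
      m * T n (m - 1) (ω J) p + ∑ k ∈ Jᶜ, X k * T n m (pd n k (ω J)) p := by
    rw [Finset.sum_add_distrib, Finset.sum_const, Finset.card_compl, Fintype.card_fin, nsmul_eq_mul]
  have h6 := Finset.sum_add_sum_compl J (fun j => X j * T n m (pd n j (ω J)) p)
  have h7 : resd n ω J p = 0 ^ m * ω J (p.2, p.2) := by
    unfold resd
    split_ifs with h
    · have : m = 0 := by simp [hm, h]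
      rw [this, h]; simp
    · have : m ≠ 0 := by
        have := (Finset.card_lt_iff_ne_univ J).2 h
        simp only [Fintype.card_fin] at this
        omega
      rw [zero_pow this]; simp
  rw [h1, h2, h5, h7]
  linear_combination h3 + h4 + h6

end Comb

/-- For every `0 ≤ q ≤ n` and `ω ∈ Ǩ^q`,
`d_Ǩ(P̌ ω) + P̌(d_Ǩ ω) = ω - reš(ω)` on `U × U`, and moreover `P̌ ∘ P̌ = 0`. -/
theorem statement10 (n : ℕ) (hn : 1 ≤ n)
    (U : Set (Fin n → ℂ)) (hUopen : IsOpen U) (hUconv : Convex ℝ U)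
    (hUne : U.Nonempty)
    (q : ℕ) (hq : q ≤ n) (ω : Coeff n) (hω : MemK n U q ω) :
    (∀ J : Finset (Fin n), ∀ p ∈ U ×ˢ U,
        dKd n (Pd n ω) J p + Pd n (dKd n ω) J p = ω J p - resd n ω J p) ∧
    (∀ J : Finset (Fin n), ∀ p ∈ U ×ˢ U, Pd n (Pd n ω) J p = 0) := by
  have hS : Good (U ×ˢ U) := by
    refine ⟨hUopen.prod hUopen, fun p hp t ht => ⟨?_, hp.2⟩⟩
    exact hUconv.add_smul_sub_mem hp.2 hp.1 ht
  exact ⟨fun J p hp => homotopy hS ω hω.2 J hp, fun J p hp => PP hS ω hω.2 J hp⟩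

end TwistedKoszulDual
end
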